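/- arXiv:2301.00085 — 2 statements merged into one kernel-verified Lean document; each statement's English description precedes it below -/
import Mathlib

section
/- For every integer r ≥ 3 and every ε > 0 there exists d₀ = d₀(r, ε) such that for every fixed integer d ≥ d₀ the following holds. Set m = m(n) := ⌊(d − d^{1/2} log d)·n/r⌋ and D := r·m/n. For every sequence of integers m′ = m′(n) with m − log n ≤ m′ ≤ m, with high probability the uniform random r-uniform hypergraph H_r(n, m′) with exactly m′ hyperedges satisfies both |χ(H_r(n,m′)) − X| ≤ (ε/2)·X and |α(H_r(n,m′)) − Y·n| ≤ (ε/2)·Y·n, where X := ((r−1)d/(r log d))^{1/(r−1)} and Y := (r log D/((r−1)D))^{1/(r−1)}. -/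
/-!
Write `X = ((r-1)d/(r log d))^{1/(r-1)}`. It suffices to show, for small `η`, that with high
probability `χ ≤ (1 + 2η) X` and `α ≤ (1 + 3η) n / X`: since colour classes are independent sets,
`n ≤ χ α`, which supplies the two matching lower bounds, and `X Y` is within a factor `1 ± η` of `1`.

*Model.* All estimates are made for a uniform sequence of `m` tuples in `Fin r → Fin n`. A hypergraph
with exactly `m` edges corresponds to at least `m! (r!)^m` such sequences (`le_card_edgeSet_eq`), and
for `m = O(n)` a constant proportion of all sequences arise in this way (`family_card_ge`), so events
of vanishing probability transfer (`uniformProb_family_le`).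

*Independence number.* The union bound over vertex sets of size `⌈(1 + 3η) n / X⌉` suffices
(`indep_prob_tendsto`).

*Chromatic number.* Put `k = ⌈(1 + η) X⌉`. A second moment computation over nearly balanced
`k`-colourings shows that `k`-colourability has probability at least `n^{-O(1)}`
(`colorable_prob_poly`). The pair correlations are controlled by an entropy estimate for the overlap
matrix of two colourings, applied row by row (`row_bound`, `pair_ratio_le`). The minimal number of
monochromatic tuples over all `k`-colourings changes by at most one when a tuple is changed; as it
vanishes with at least inverse polynomial probability, the Azuma–Hoeffding bound makes it at most
`δ n` with high probability (`prob_zero_mul_prob_ge`). Finally, with high probability every vertex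
set `W` of size at most `δ n` contains fewer than `|W|` tuples (`prob_dense_le`), so one vertex of
each bad tuple can be recoloured greedily with `r` new colours (`exists_coloring_of_few_mono`). Hence
`χ ≤ k + r` (`not_colorable_prob_tendsto`).
-/

open Finset Filter Real

open scoped Classical

/-- All `r`-element subsets of `Fin n`, i.e. the potential hyperedges. -/
noncomputable def edgeCandidates (n r : ℕ) : Finset (Finset (Fin n)) :=
  Finset.univ.filter (fun e : Finset (Fin n) => e.card = r)

/-- The family of all `r`-uniform hypergraphs on `Fin n` with exactly `m` hyperedges. -/
noncomputable def uniformEdgeFamily (n r m : ℕ) : Finset (Finset (Finset (Fin n))) :=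
  (edgeCandidates n r).powerset.filter (fun E => E.card = m)

/-- The probability that a uniformly random element of `family` satisfies `P`. -/
noncomputable def uniformProb {α : Type*} (family : Finset α) (P : α → Prop) : ℝ :=
  ((family.filter (fun x => P x)).card : ℝ) / (family.card : ℝ)

/-- A coloring `c` of the vertices is proper for the hypergraph with edge set `E`
if no edge has all its vertices of the same color. -/
def ProperColoring {n k : ℕ} (E : Finset (Finset (Fin n))) (c : Fin n → Fin k) : Prop :=
  ∀ e ∈ E, ∃ v ∈ e, ∃ w ∈ e, c v ≠ c w

/-- The chromatic number of the hypergraph with edge set `E`. -/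
noncomputable def chromaticNumber {n : ℕ} (E : Finset (Finset (Fin n))) : ℕ :=
  sInf {k : ℕ | ∃ c : Fin n → Fin k, ProperColoring E c}

/-- A set of vertices is independent if it contains no edge. -/
def IndepSet {n : ℕ} (E : Finset (Finset (Fin n))) (S : Finset (Fin n)) : Prop :=
  ∀ e ∈ E, ¬ e ⊆ S

/-- The independence number of the hypergraph with edge set `E`. -/
noncomputable def independenceNumber {n : ℕ} (E : Finset (Finset (Fin n))) : ℕ :=
  sSup {s : ℕ | ∃ S : Finset (Fin n), S.card = s ∧ IndepSet E S}

/-- `m(n) = ⌊(d − √d log d)·n/r⌋`. -/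
noncomputable def mFun (r d n : ℕ) : ℕ :=
  ⌊((d : ℝ) - (d : ℝ) ^ ((1 : ℝ) / 2) * Real.log d) * n / r⌋₊

/-- `D(n) = r·m(n)/n`. -/
noncomputable def DFun (r d n : ℕ) : ℝ :=
  (r : ℝ) * mFun r d n / n


/-! ### The entropy inequality for one row -/

lemma pow_bregman_le (r : ℕ) (x : ℝ) (hx : 0 ≤ x) :
    x ^ (r + 2) - (r + 2) * x + (r + 1) ≤ (r + 2) ^ 2 * (x - 1) ^ 2 * (x + 1) ^ r := by
  induction r with
  | zero => norm_num; nlinarith [sq_nonneg (x - 1)]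
  | succ r ih =>
    have h1 : x ^ (r + 1 + 2) - ((r + 1 : ℕ) + 2) * x + ((r + 1 : ℕ) + 1)
        = x * (x ^ (r + 2) - (r + 2) * x + (r + 1)) + (r + 2) * (x - 1) ^ 2 := by
      push_cast; ring
    rw [h1]
    have h2 := mul_le_mul_of_nonneg_left ih hx
    have hp : 1 ≤ (x + 1) ^ r := one_le_pow₀ (by linarith)
    have h3 : (1 : ℝ) ≤ (x + 1) ^ (r + 1) := one_le_pow₀ (by linarith)
    have hs := sq_nonneg (x - 1)
    have h4 : x * (x + 1) ^ r ≤ (x + 1) ^ (r + 1) := by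
      rw [pow_succ]; nlinarith
    push_cast
    calc _ ≤ x * ((r + 2) ^ 2 * (x - 1) ^ 2 * (x + 1) ^ r) + (r + 2) * (x - 1) ^ 2 := by linarith
      _ = (x - 1) ^ 2 * ((r + 2) ^ 2 * (x * (x + 1) ^ r) + (r + 2) * 1) := by ring
      _ ≤ (x - 1) ^ 2 * ((r + 2) ^ 2 * ((x + 1) ^ (r + 1)) + (r + 2) * (x + 1) ^ (r + 1)) := by
          gcongr
      _ ≤ (x - 1) ^ 2 * ((r + 1 + 2) ^ 2 * (x + 1) ^ (r + 1)) := by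
          gcongr
          have : (0 : ℝ) ≤ r := Nat.cast_nonneg r
          nlinarith
      _ = _ := by ring

lemma entropy_bregman_ge (x : ℝ) (hx : 0 ≤ x) :
    (x - 1) ^ 2 / (2 * (x + 1)) ≤ x * log x - x + 1 := by
  rcases hx.eq_or_lt with rfl | hx'
  · norm_num
  · set y := √x with hy
    have hy0 : 0 < y := Real.sqrt_pos.2 hx'
    have hxy : x = y ^ 2 := (Real.sq_sqrt hx).symm
    rw [hxy, Real.log_pow]
    have h1 := Real.one_sub_inv_le_log_of_pos hy0
    have h2 : y ^ 2 * (1 - y⁻¹) ≤ y ^ 2 * log y := by gcongr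
    have h3 : y ^ 2 * (1 - y⁻¹) = y ^ 2 - y := by field_simp
    rw [div_le_iff₀ (by positivity)]
    push_cast
    have h4 : (y - 1) ^ 2 ≤ y ^ 2 * (2 * log y) - y ^ 2 + 1 := by nlinarith
    have h5 : (y ^ 2 - 1) ^ 2 ≤ (y - 1) ^ 2 * (2 * (y ^ 2 + 1)) := by
      nlinarith [sq_nonneg ((y - 1) ^ 2)]
    nlinarith [sq_nonneg y]

/-- The one-coordinate inequality: the Bregman divergence of `x ^ r` at `1`, scaled by anything
below `(1 - e) log k`, is dominated on `[0, k]` by that of `x log x`. Near `1` both are quadratic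
and the left side carries the tiny factor `k ^ (1 - r)`; near `k` the slack `e * log k` is used. -/
lemma bregman_le_entropy (r k : ℕ) (hr : 3 ≤ r) (lam e : ℝ) (hlam0 : 0 ≤ lam)
    (hlam : lam ≤ (1 - e) * log k) (he2 : 2 ≤ e * log k) (hk4 : 4 ≤ log k)
    (hk : 8 * (r : ℝ) ^ 2 * log k ≤ k) (x : ℝ) (hx0 : 0 ≤ x) (hxk : x ≤ k) :
    lam * (x ^ r - r * x + (r - 1)) ≤ (k : ℝ) ^ (r - 1) * (x * log x - x + 1) := by
  obtain ⟨s, rfl⟩ : ∃ s, r = s + 3 := ⟨r - 3, by omega⟩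
  have hk0 : (0 : ℝ) < k := by
    rcases Nat.eq_zero_or_pos k with h | h
    · subst h; norm_num at hk4
    · exact_mod_cast h
  have hk1 : (1 : ℝ) ≤ k := by
    have : 0 < k := by exact_mod_cast hk0
    exact_mod_cast this
  have hlamL : lam ≤ log k := by nlinarith
  have hr1 : s + 3 - 1 = s + 2 := by omega
  rw [hr1]
  have hb := pow_bregman_le (s + 1) x hx0
  have hs0 : (0 : ℝ) ≤ s := Nat.cast_nonneg s
  have hbreg : x ^ (s + 3) - ((s + 3 : ℕ) : ℝ) * x + (((s + 3 : ℕ) : ℝ) - 1) ≤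
      ((s + 3 : ℕ) : ℝ) ^ 2 * (x - 1) ^ 2 * (x + 1) ^ (s + 1) := by
    push_cast at hb ⊢
    have e1 : (s : ℝ) + 1 + 2 = s + 3 := by ring
    rw [e1] at hb
    linarith
  by_cases hsm : (x + 1) ^ 2 ≤ 4 * k
  · -- small `x`
    have he := entropy_bregman_ge x hx0
    have hR : (0 : ℝ) ≤ ((s + 3 : ℕ) : ℝ) ^ 2 := by positivity
    set R : ℝ := ((s + 3 : ℕ) : ℝ) ^ 2 with hRdef
    have hR1 : (1 : ℝ) ≤ R := by
      rw [hRdef]; push_cast; nlinarith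
    have hx1k : x + 1 ≤ k := by
      have hk32 : 32 ≤ (k : ℝ) := by nlinarith
      have : (x + 1) ^ 2 ≤ (k : ℝ) ^ 2 := by nlinarith
      exact le_of_sq_le_sq this hk0.le
    have hpow : (x + 1) ^ (s + 2) * (2 * R * lam) ≤ (k : ℝ) ^ (s + 2) := by
      calc (x + 1) ^ (s + 2) * (2 * R * lam) = (x + 1) ^ s * ((x + 1) ^ 2 * (2 * R * lam)) := by ring
        _ ≤ (k : ℝ) ^ s * ((4 * k) * (2 * R * log k)) := by gcongr
        _ = (k : ℝ) ^ s * (k * (8 * R * log k)) := by ring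
        _ ≤ (k : ℝ) ^ s * (k * k) := by gcongr
        _ = _ := by ring
    calc lam * (x ^ (s + 3) - ((s + 3 : ℕ) : ℝ) * x + (((s + 3 : ℕ) : ℝ) - 1))
        ≤ lam * (R * (x - 1) ^ 2 * (x + 1) ^ (s + 1)) := by gcongr
      _ = ((x + 1) ^ (s + 2) * (2 * R * lam)) * ((x - 1) ^ 2 / (2 * (x + 1))) := by
          field_simp
          ring
      _ ≤ (k : ℝ) ^ (s + 2) * ((x - 1) ^ 2 / (2 * (x + 1))) := by gcongr
      _ ≤ _ := by gcongr
  · push Not at hsm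
    -- large `x`: here `x ≥ √k`
    have hx1 : 1 ≤ x := by
      by_contra h
      push Not at h
      nlinarith
    have hxsq : (k : ℝ) ≤ x ^ 2 := by nlinarith
    have hxpos : 0 < x := by linarith
    have hlogx : log k ≤ 2 * log x := by
      have := Real.log_le_log hk0 hxsq
      rwa [Real.log_pow] at this
    have hxr : x ^ (s + 2) ≤ (k : ℝ) ^ s * x ^ 2 := by
      rw [pow_add]; gcongr
    have hdrop : x ^ (s + 3) - ((s + 3 : ℕ) : ℝ) * x + (((s + 3 : ℕ) : ℝ) - 1) ≤ x ^ (s + 3) := by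
      push_cast; nlinarith
    have key : lam * x ^ 2 ≤ (k : ℝ) ^ 2 * (log x - 1) := by
      by_cases hh : 2 * x ≤ k
      · have h1 : 4 * x ^ 2 ≤ (k : ℝ) ^ 2 := by nlinarith
        have h2 : log k / 4 ≤ log x - 1 := by linarith
        calc lam * x ^ 2 ≤ log k * ((k : ℝ) ^ 2 / 4) := by
              gcongr; linarith
          _ = (k : ℝ) ^ 2 * (log k / 4) := by ring
          _ ≤ _ := by gcongr
      · push Not at hh
        have h1 : log k - 1 ≤ log x := by
          have h2 : log k ≤ log (2 * x) := Real.log_le_log hk0 hh.le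
          rw [Real.log_mul (by norm_num) hxpos.ne'] at h2
          have := Real.log_two_lt_d9
          linarith
        calc lam * x ^ 2 ≤ ((1 - e) * log k) * (k : ℝ) ^ 2 := by
              gcongr
              exact hlam0.trans hlam
          _ = (k : ℝ) ^ 2 * ((1 - e) * log k) := by ring
          _ ≤ _ := by gcongr; linarith
    calc _ ≤ lam * x ^ (s + 3) := by gcongr
      _ = x * (lam * x ^ (s + 2)) := by ring
      _ ≤ x * (lam * ((k : ℝ) ^ s * x ^ 2)) := by gcongr
      _ = (k : ℝ) ^ s * x * (lam * x ^ 2) := by ring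
      _ ≤ (k : ℝ) ^ s * x * ((k : ℝ) ^ 2 * (log x - 1)) := by gcongr
      _ = (k : ℝ) ^ (s + 2) * (x * log x - x) := by ring
      _ ≤ _ := by gcongr; linarith

/-- Summed form: for a probability vector `h / H` on `k` points, the `r`-th power sum in excess of
its minimum is controlled by the relative entropy with respect to the uniform distribution. -/
lemma row_bound (r k : ℕ) (hr : 3 ≤ r) (lam e : ℝ) (hlam0 : 0 ≤ lam)
    (hlam : lam ≤ (1 - e) * log k) (he2 : 2 ≤ e * log k) (hk4 : 4 ≤ log k)
    (hk : 8 * (r : ℝ) ^ 2 * log k ≤ k) (h : Fin k → ℝ) (h0 : ∀ j, 0 ≤ h j) (H : ℝ) (hH : 0 < H)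
    (hsum : ∑ j, h j = H) :
    lam * (∑ j, (h j / H) ^ r - 1 / (k : ℝ) ^ (r - 1)) ≤
      ∑ j, (h j / H) * log (k * (h j / H)) := by
  have hk0 : (0 : ℝ) < k := by
    rcases Nat.eq_zero_or_pos k with h | h
    · subst h; norm_num at hk4
    · exact_mod_cast h
  have hb1 : ∑ j, h j / H = 1 := by rw [← Finset.sum_div, hsum, div_self hH.ne']
  have hle1 : ∀ j, h j / H ≤ 1 := fun j => by
    rw [← hb1]
    exact Finset.single_le_sum (f := fun j => h j / H)
      (fun i _ => div_nonneg (h0 i) hH.le) (Finset.mem_univ j)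
  have hs := Finset.sum_le_sum (s := Finset.univ) (fun j (_ : j ∈ Finset.univ) =>
    bregman_le_entropy r k hr lam e hlam0 hlam he2 hk4 hk (k * (h j / H))
      (by have := h0 j; positivity) (by nlinarith [hle1 j]))
  rw [← Finset.mul_sum, ← Finset.mul_sum] at hs
  simp only [Finset.sum_add_distrib, Finset.sum_sub_distrib, mul_pow, ← Finset.mul_sum, hb1,
    Finset.sum_const, Finset.card_univ, Fintype.card_fin, nsmul_eq_mul, mul_one] at hs
  have hpow : (k : ℝ) ^ r = (k : ℝ) ^ (r - 1) * k := by
    rw [← pow_succ]; congr 1; omega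
  have h2 : (k : ℝ) ^ r * (lam * (∑ j, (h j / H) ^ r - 1 / (k : ℝ) ^ (r - 1))) ≤
      (k : ℝ) ^ r * ∑ j, (h j / H) * log (k * (h j / H)) := by
    calc _ = lam * ((k : ℝ) ^ r * ∑ j, (h j / H) ^ r - r * k + k * (r - 1)) := by
          rw [hpow]; field_simp; try ring
      _ ≤ _ := by
          refine le_trans (le_of_eq (by ring)) (hs.trans (le_of_eq ?_))
          rw [hpow]
          simp only [mul_assoc, ← Finset.mul_sum]
          ring
  exact le_of_mul_le_mul_left h2 (by positivity)

/-! ### Overlaps of two colourings -/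

/-- The tuple `e` of vertices is monochromatic under `σ`. -/
def MonoT {n r : ℕ} {K : Type*} (σ : Fin n → K) (e : Fin r → Fin n) : Prop :=
  ∃ j, ∀ a, σ (e a) = j

/-- Size of the colour class `j` of `σ`. -/
noncomputable def cls {n : ℕ} {K : Type*} (σ : Fin n → K) (j : K) : ℕ :=
  (Finset.univ.filter (fun v => σ v = j)).card

/-- Number of vertices coloured `i` by `σ` and `j` by `τ`. -/
noncomputable def ov {n : ℕ} {K : Type*} (σ τ : Fin n → K) (i j : K) : ℕ :=
  cls (fun v => (σ v, τ v)) (i, j)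

lemma card_monoT {n r : ℕ} (hr : 0 < r) {K : Type*} [Fintype K] (σ : Fin n → K) :
    (Finset.univ.filter (fun e : Fin r → Fin n => MonoT σ e)).card = ∑ j, cls σ j ^ r := by
  have h1 : (Finset.univ.filter (fun e : Fin r → Fin n => MonoT σ e)) =
      Finset.univ.biUnion (fun j : K =>
        Fintype.piFinset (fun _ : Fin r => Finset.univ.filter (fun v => σ v = j))) := by
    ext e
    rw [Finset.mem_filter]
    simp [MonoT, Fintype.mem_piFinset]
  rw [h1, Finset.card_biUnion]
  · simp [cls]
  · intro i _ j _ hij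
    rw [Function.onFun, Finset.disjoint_left]
    intro e he he'
    simp only [Fintype.mem_piFinset, Finset.mem_filter, Finset.mem_univ, true_and] at he he'
    exact hij ((he ⟨0, hr⟩).symm.trans (he' ⟨0, hr⟩))

lemma sum_cls {n : ℕ} {K : Type*} [Fintype K] (σ : Fin n → K) : ∑ j, cls σ j = n := by
  have := Finset.card_eq_sum_card_fiberwise (f := σ) (s := Finset.univ) (t := Finset.univ)
    (fun _ _ => Finset.mem_coe.2 (Finset.mem_univ _))
  simpa [cls] using this.symm

lemma sum_ov {n : ℕ} {K : Type*} [Fintype K] (σ τ : Fin n → K) (i : K) :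
    ∑ j, ov σ τ i j = cls σ i := by
  have := Finset.card_eq_sum_card_fiberwise (f := τ)
    (s := Finset.univ.filter (fun v => σ v = i)) (t := Finset.univ)
    (fun _ _ => Finset.mem_coe.2 (Finset.mem_univ _))
  rw [cls, this]
  simp [ov, cls, Finset.filter_filter]

lemma sum_comp_pair {n : ℕ} {K : Type*} [Fintype K] (σ τ : Fin n → K) (g : K → K → ℝ) :
    ∑ v, g (σ v) (τ v) = ∑ i, ∑ j, (ov σ τ i j : ℝ) * g i j := by
  have := Finset.sum_fiberwise' Finset.univ (fun v => (σ v, τ v)) (fun p : K × K => g p.1 p.2)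
  rw [← this, Fintype.sum_prod_type]
  simp [ov, cls]

lemma cls_pos {n : ℕ} {K : Type*} (σ : Fin n → K) (v : Fin n) : 0 < cls σ (σ v) :=
  Finset.card_pos.2 ⟨v, by simp⟩

lemma ov_pos {n : ℕ} {K : Type*} (σ τ : Fin n → K) (v : Fin n) : 0 < ov σ τ (σ v) (τ v) :=
  cls_pos (fun v => (σ v, τ v)) v

lemma cls_le {n : ℕ} {K : Type*} (σ : Fin n → K) (j : K) : cls σ j ≤ n :=
  (Finset.card_le_univ _).trans (by simp)

/-- Grouping the `τ` by their overlap matrix, each group contributes at most `1`, because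
`v ↦ H (σ v) · / cls σ (σ v)` is a probability distribution for each realised matrix `H`. -/
lemma sum_prod_overlap_le {n k : ℕ} (σ : Fin n → Fin k) :
    ∑ τ : Fin n → Fin k, ∏ v, ((ov σ τ (σ v) (τ v) : ℝ) / cls σ (σ v)) ≤
      ((n : ℝ) + 1) ^ (k * k) := by
  let M : (Fin n → Fin k) → (Fin k → Fin k → Fin (n + 1)) := fun τ i j =>
    ⟨ov σ τ i j, Nat.lt_succ_of_le (cls_le _ _)⟩
  rw [← Finset.sum_fiberwise Finset.univ M]
  have hgroup : ∀ H : Fin k → Fin k → Fin (n + 1),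
      ∑ τ ∈ Finset.univ.filter (fun τ => M τ = H),
        ∏ v, ((ov σ τ (σ v) (τ v) : ℝ) / cls σ (σ v)) ≤ 1 := by
    intro H
    by_cases hH : ∃ τ₀, M τ₀ = H
    · obtain ⟨τ₀, rfl⟩ := hH
      calc _ = ∑ τ ∈ Finset.univ.filter (fun τ => M τ = M τ₀),
            ∏ v, ((ov σ τ₀ (σ v) (τ v) : ℝ) / cls σ (σ v)) := by
            refine Finset.sum_congr rfl fun τ hτ => Finset.prod_congr rfl fun v _ => ?_
            have h := congrFun (congrFun (Finset.mem_filter.1 hτ).2 (σ v)) (τ v)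
            have h' : ov σ τ (σ v) (τ v) = ov σ τ₀ (σ v) (τ v) := congrArg Fin.val h
            rw [h']
        _ ≤ ∑ τ : Fin n → Fin k, ∏ v, ((ov σ τ₀ (σ v) (τ v) : ℝ) / cls σ (σ v)) :=
            Finset.sum_le_sum_of_subset_of_nonneg (Finset.filter_subset _ _)
              (fun τ _ _ => Finset.prod_nonneg fun v _ => by positivity)
        _ = ∏ v, ∑ j, ((ov σ τ₀ (σ v) j : ℝ) / cls σ (σ v)) := by
            rw [Finset.prod_univ_sum, Fintype.piFinset_univ]
        _ = 1 := by
            refine Finset.prod_eq_one fun v _ => ?_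
            rw [← Finset.sum_div, ← Nat.cast_sum, sum_ov]
            exact div_self (by exact_mod_cast (cls_pos σ v).ne')
    · rw [Finset.filter_false_of_mem (fun τ _ h => hH ⟨τ, h⟩)]
      simp
  calc _ ≤ ∑ H : Fin k → Fin k → Fin (n + 1), (1 : ℝ) := Finset.sum_le_sum fun H _ => hgroup H
    _ = _ := by simp [pow_mul]

/-- The normalised number of `σ`-monochromatic `r`-tuples. -/
noncomputable def monoDensity {n : ℕ} {K : Type*} [Fintype K] (r : ℕ) (σ : Fin n → K) : ℝ :=
  ∑ j, ((cls σ j : ℝ) / n) ^ r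

lemma sum_cls_div {n : ℕ} (hn : 0 < n) {K : Type*} [Fintype K] (σ : Fin n → K) :
    ∑ j, ((cls σ j : ℝ) / n) = 1 := by
  rw [← Finset.sum_div, ← Nat.cast_sum, sum_cls]
  exact div_self (by exact_mod_cast hn.ne')

lemma monoDensity_le {n k r : ℕ} (hr : 1 ≤ r) (hn : 0 < n) (σ : Fin n → Fin k) (a : ℝ)
    (ha : ∀ i, (cls σ i : ℝ) ≤ a * n) : monoDensity r σ ≤ a ^ (r - 1) := by
  have hn' : (0 : ℝ) < n := by exact_mod_cast hn
  obtain ⟨s, rfl⟩ : ∃ s, r = s + 1 := ⟨r - 1, by omega⟩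
  calc monoDensity (s + 1) σ ≤ ∑ j, a ^ s * ((cls σ j : ℝ) / n) := by
        refine Finset.sum_le_sum fun j _ => ?_
        rw [pow_succ]
        gcongr
        rw [div_le_iff₀ hn']; exact ha j
    _ = _ := by rw [← Finset.mul_sum, sum_cls_div hn]; simp

lemma le_monoDensity {n k r : ℕ} (hr : 1 ≤ r) (hn : 0 < n) (σ : Fin n → Fin k) :
    1 / (k : ℝ) ^ (r - 1) ≤ monoDensity r σ := by
  obtain ⟨s, rfl⟩ : ∃ s, r = s + 1 := ⟨r - 1, by omega⟩
  have h := pow_sum_div_card_le_sum_pow (s := Finset.univ) (f := fun j => (cls σ j : ℝ) / n)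
    (fun j _ => by positivity) s
  rw [sum_cls_div hn] at h
  simpa [monoDensity] using h

lemma card_mono_eq {n r : ℕ} (hr : 0 < r) (hn : 0 < n) {K : Type*} [Fintype K] (σ : Fin n → K) :
    ((Finset.univ.filter (fun e : Fin r → Fin n => MonoT σ e)).card : ℝ) =
      (n : ℝ) ^ r * monoDensity r σ := by
  have hn' : (n : ℝ) ≠ 0 := by exact_mod_cast hn.ne'
  rw [card_monoT hr, monoDensity, Finset.mul_sum]
  push_cast
  refine Finset.sum_congr rfl fun j _ => ?_
  rw [← mul_pow]; congr 1; field_simp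

lemma card_proper {n r : ℕ} (hr : 0 < r) (hn : 0 < n) {K : Type*} [Fintype K] (σ : Fin n → K) :
    ((Finset.univ.filter (fun e : Fin r → Fin n => ¬ MonoT σ e)).card : ℝ) =
      (n : ℝ) ^ r * (1 - monoDensity r σ) := by
  have h := Finset.card_filter_add_card_filter_not (s := (Finset.univ : Finset (Fin r → Fin n)))
    (fun e => MonoT σ e)
  have h' : ((Finset.univ.filter (fun e : Fin r → Fin n => MonoT σ e)).card : ℝ) +
      (Finset.univ.filter (fun e : Fin r → Fin n => ¬ MonoT σ e)).card = (n : ℝ) ^ r := by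
    rw [← Nat.cast_add, h]; simp
  rw [card_mono_eq hr hn] at h'
  linarith

lemma card_both_proper {n r : ℕ} (hr : 0 < r) (hn : 0 < n) {K : Type*} [Fintype K]
    (σ τ : Fin n → K) :
    ((Finset.univ.filter (fun e : Fin r → Fin n => ¬ MonoT σ e ∧ ¬ MonoT τ e)).card : ℝ) =
      (n : ℝ) ^ r * (1 - monoDensity r σ - monoDensity r τ +
        monoDensity r (fun v => (σ v, τ v))) := by
  have h1 := card_proper hr hn σ
  have h2 := card_mono_eq hr hn τ
  have h3 := card_mono_eq hr hn (fun v => (σ v, τ v))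
  have hmono : ∀ e : Fin r → Fin n, MonoT (fun v => (σ v, τ v)) e ↔ MonoT τ e ∧ MonoT σ e := by
    intro e
    constructor
    · rintro ⟨⟨i, j⟩, h⟩
      exact ⟨⟨j, fun a => (Prod.ext_iff.1 (h a)).2⟩, ⟨i, fun a => (Prod.ext_iff.1 (h a)).1⟩⟩
    · rintro ⟨⟨j, hj⟩, ⟨i, hi⟩⟩
      exact ⟨(i, j), fun a => Prod.ext (hi a) (hj a)⟩
  have h4 := Finset.card_filter_add_card_filter_not
    (s := Finset.univ.filter (fun e : Fin r → Fin n => ¬ MonoT σ e)) (fun e => MonoT τ e)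
  have h5 := Finset.card_filter_add_card_filter_not
    (s := Finset.univ.filter (fun e : Fin r → Fin n => MonoT τ e)) (fun e => MonoT σ e)
  simp only [Finset.filter_filter] at h4 h5
  simp only [hmono] at h3
  have h6 : (Finset.univ.filter (fun e : Fin r → Fin n => ¬ MonoT σ e ∧ MonoT τ e)).card =
      (Finset.univ.filter (fun e : Fin r → Fin n => MonoT τ e ∧ ¬ MonoT σ e)).card := by
    simp only [and_comm]
  rw [h6] at h4
  have h4' := congrArg (Nat.cast (R := ℝ)) h4
  have h5' := congrArg (Nat.cast (R := ℝ)) h5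
  push_cast at h4' h5'
  linarith

/-- The ratio `P(σ and τ proper) / (P(σ proper) P(τ proper))` for `m` independent random tuples is
at most `k ^ n` times the product appearing in `sum_prod_overlap_le`. -/
lemma pair_ratio_le {n k r m : ℕ} (hr : 3 ≤ r) (hn : 0 < n) (e a : ℝ)
    (he2 : 2 ≤ e * log k) (hk4 : 4 ≤ log k)
    (hk : 8 * (r : ℝ) ^ 2 * log k ≤ k) (ha1 : a ^ (r - 1) < 1)
    (hm : m * a ^ (r - 1) / (1 - a ^ (r - 1)) ^ 2 ≤ (1 - e) * log k * n)
    (σ τ : Fin n → Fin k) (hσ : ∀ i, (cls σ i : ℝ) ≤ a * n) (hτ : ∀ i, (cls τ i : ℝ) ≤ a * n) :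
    (1 - monoDensity r σ - monoDensity r τ + monoDensity r (fun v => (σ v, τ v))) ^ m ≤
      (1 - monoDensity r σ) ^ m * (1 - monoDensity r τ) ^ m *
        ((k : ℝ) ^ n * ∏ v, ((ov σ τ (σ v) (τ v) : ℝ) / cls σ (σ v))) := by
  have hk0 : 0 < k := by
    rcases Nat.eq_zero_or_pos k with h | h
    · subst h; norm_num at hk4
    · exact h
  have hn' : (0 : ℝ) < n := by exact_mod_cast hn
  have hk' : (0 : ℝ) < k := by exact_mod_cast hk0
  have hqσ := monoDensity_le (r := r) (by omega) hn σ a hσ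
  have hqτ := monoDensity_le (r := r) (by omega) hn τ a hτ
  have hlτ := le_monoDensity (r := r) (by omega) hn τ
  have hlσ := le_monoDensity (r := r) (by omega) hn σ
  set p := monoDensity r σ with hp
  set q := monoDensity r τ with hq
  set s := monoDensity r (fun v => (σ v, τ v)) with hs
  set A := a ^ (r - 1) with hA
  have hA1 : 0 < 1 - A := by linarith
  have hp1 : 0 < 1 - p := by linarith
  have hq1 : 0 < 1 - q := by linarith
  have hkp : 0 < 1 / (k : ℝ) ^ (r - 1) := by positivity
  have hs0 : 0 ≤ s := Finset.sum_nonneg fun j _ => by positivity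
  set G := 1 / ((1 - p) * (1 - q)) with hG
  have hG0 : 0 < G := by positivity
  have hGle : G ≤ 1 / (1 - A) ^ 2 := by
    rw [hG, sq]
    apply one_div_le_one_div_of_le (by positivity)
    gcongr
  -- the exponent, row by row
  have hrow : ∀ i, m * G * (∑ j, ((ov σ τ i j : ℝ) / n) ^ r -
        ((cls σ i : ℝ) / n) ^ r * (1 / (k : ℝ) ^ (r - 1))) ≤
      ∑ j, (ov σ τ i j : ℝ) * log (k * ((ov σ τ i j : ℝ) / cls σ i)) := by
    intro i
    rcases Nat.eq_zero_or_pos (cls σ i) with h0 | hpos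
    · have hz : ∀ j, ov σ τ i j = 0 := by
        intro j
        have := sum_ov σ τ i
        rw [h0, Finset.sum_eq_zero_iff] at this
        exact this j (Finset.mem_univ j)
      have hr0 : r ≠ 0 := by omega
      simp [hz, h0, hr0]
    · have hc : (0 : ℝ) < cls σ i := by exact_mod_cast hpos
      have hsum : ∑ j, (ov σ τ i j : ℝ) = cls σ i := by rw [← Nat.cast_sum, sum_ov]
      have hlam : m * G * (((cls σ i : ℝ) / n) ^ (r - 1) / n) ≤ (1 - e) * log k := by
        have h1 : ((cls σ i : ℝ) / n) ^ (r - 1) ≤ A := by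
          rw [hA]; gcongr
          rw [div_le_iff₀ hn']; exact hσ i
        have hA0 : 0 ≤ A := le_trans (by positivity) h1
        calc m * G * (((cls σ i : ℝ) / n) ^ (r - 1) / n)
            ≤ m * (1 / (1 - A) ^ 2) * (A / n) := by gcongr
          _ = (m * A / (1 - A) ^ 2) / n := by field_simp
          _ ≤ _ := by rw [div_le_iff₀ hn']; exact hm
      have hb := row_bound r k hr _ e (by positivity) hlam he2 hk4 hk
        (fun j => (ov σ τ i j : ℝ)) (fun j => by positivity) (cls σ i) hc hsum
      have hb2 := mul_le_mul_of_nonneg_left hb hc.le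
      calc _ = (cls σ i : ℝ) * (m * G * (((cls σ i : ℝ) / n) ^ (r - 1) / n) *
              (∑ j, ((ov σ τ i j : ℝ) / cls σ i) ^ r - 1 / (k : ℝ) ^ (r - 1))) := by
            have h1 : ∀ j, ((ov σ τ i j : ℝ) / n) ^ r =
                ((cls σ i : ℝ) / n) ^ r * ((ov σ τ i j : ℝ) / cls σ i) ^ r := by
              intro j; rw [← mul_pow]; congr 1; field_simp
            have h2 : ((cls σ i : ℝ) / n) ^ r =
                ((cls σ i : ℝ) / n) ^ (r - 1) * ((cls σ i : ℝ) / n) := by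
              rw [← pow_succ]; congr 1; omega
            simp only [h1, ← Finset.mul_sum]
            rw [h2]; ring
        _ ≤ _ := hb2
        _ = _ := by
            rw [Finset.mul_sum]
            refine Finset.sum_congr rfl fun j _ => ?_
            field_simp
  have hexp : m * ((s - p * q) * G) ≤
      ∑ v, log (k * ((ov σ τ (σ v) (τ v) : ℝ) / cls σ (σ v))) := by
    rw [sum_comp_pair σ τ (fun i j => log (k * ((ov σ τ i j : ℝ) / cls σ i)))]
    calc m * ((s - p * q) * G) ≤ m * ((s - p * (1 / (k : ℝ) ^ (r - 1))) * G) := by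
          have : 0 ≤ p := hkp.le.trans hlσ
          gcongr
      _ = m * G * (s - p * (1 / (k : ℝ) ^ (r - 1))) := by ring
      _ = ∑ i, m * G * (∑ j, ((ov σ τ i j : ℝ) / n) ^ r -
            ((cls σ i : ℝ) / n) ^ r * (1 / (k : ℝ) ^ (r - 1))) := by
          rw [← Finset.mul_sum, Finset.sum_sub_distrib, ← Finset.sum_mul, hs, hp]
          unfold monoDensity
          rw [Fintype.sum_prod_type]
          rfl
      _ ≤ _ := Finset.sum_le_sum fun i _ => hrow i
  have hprod : rexp (∑ v, log (k * ((ov σ τ (σ v) (τ v) : ℝ) / cls σ (σ v)))) =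
      (k : ℝ) ^ n * ∏ v, ((ov σ τ (σ v) (τ v) : ℝ) / cls σ (σ v)) := by
    rw [Real.exp_sum]
    have : ∀ v, rexp (log (k * ((ov σ τ (σ v) (τ v) : ℝ) / cls σ (σ v)))) =
        k * ((ov σ τ (σ v) (τ v) : ℝ) / cls σ (σ v)) := fun v => by
      have h1 : (0 : ℝ) < ov σ τ (σ v) (τ v) := by exact_mod_cast ov_pos σ τ v
      have h2 : (0 : ℝ) < cls σ (σ v) := by exact_mod_cast cls_pos σ v
      exact Real.exp_log (by positivity)
    simp only [this, Finset.prod_mul_distrib]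
    simp
  have hid : 1 - p - q + s = (1 - p) * (1 - q) * (1 + (s - p * q) * G) := by
    rw [hG]; field_simp; ring
  have h1G : 0 ≤ 1 + (s - p * q) * G := by
    have h : 0 ≤ (1 - p) * (1 - q) * (1 + (s - p * q) * G) := by
      rw [← hid]
      have h2 := card_both_proper (r := r) (by omega) hn σ τ
      have h3 : (0 : ℝ) < (n : ℝ) ^ r := by positivity
      refine nonneg_of_mul_nonneg_right (?_ : 0 ≤ (n : ℝ) ^ r * _) h3
      rw [hp, hq, hs, ← h2]
      positivity
    exact nonneg_of_mul_nonneg_right h (by positivity)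
  rw [hid, mul_pow, mul_pow]
  refine mul_le_mul_of_nonneg_left ?_ (by positivity)
  rw [← hprod]
  calc (1 + (s - p * q) * G) ^ m ≤ (rexp ((s - p * q) * G)) ^ m := by
        gcongr
        linarith [Real.add_one_le_exp ((s - p * q) * G)]
    _ = rexp (m * ((s - p * q) * G)) := by rw [← Real.exp_nat_mul]
    _ ≤ _ := Real.exp_le_exp.2 hexp

/-! ### The second moment method for balanced colourings -/

lemma card_forall_tuple {n r m : ℕ} (P : (Fin r → Fin n) → Prop) [DecidablePred P]
    [DecidablePred (fun ω : Fin m → Fin r → Fin n => ∀ i, P (ω i))] :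
    (Finset.univ.filter (fun ω : Fin m → Fin r → Fin n => ∀ i, P (ω i))).card =
      (Finset.univ.filter P).card ^ m := by
  have : (Finset.univ.filter (fun ω : Fin m → Fin r → Fin n => ∀ i, P (ω i))) =
      Fintype.piFinset (fun _ : Fin m => Finset.univ.filter P) := by
    ext ω; rw [Finset.mem_filter, Fintype.mem_piFinset]; simp
  rw [this, Fintype.card_piFinset]
  simp

/-- Second moment bound for the weighted count `∑_{σ ∈ B} 1[σ proper] / P(σ proper)`. -/
lemma colorable_prob_ge {n k r m : ℕ} (hr : 3 ≤ r) (hn : 0 < n) (e a : ℝ)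
    (he2 : 2 ≤ e * log k) (hk4 : 4 ≤ log k)
    (hk : 8 * (r : ℝ) ^ 2 * log k ≤ k) (ha1 : a ^ (r - 1) < 1)
    (hm : m * a ^ (r - 1) / (1 - a ^ (r - 1)) ^ 2 ≤ (1 - e) * log k * n)
    (B : Finset (Fin n → Fin k)) (hB : ∀ σ ∈ B, ∀ i, (cls σ i : ℝ) ≤ a * n) :
    (B.card : ℝ) ≤ (k : ℝ) ^ n * ((n : ℝ) + 1) ^ (k * k) *
      uniformProb (Finset.univ : Finset (Fin m → Fin r → Fin n))
        (fun ω => ∃ σ : Fin n → Fin k, ∀ i, ¬ MonoT σ (ω i)) := by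
  have hr0 : 0 < r := by omega
  have hn' : (0 : ℝ) < n := by exact_mod_cast hn
  set N : ℝ := ((n : ℝ) ^ r) ^ m with hN
  have hN0 : 0 < N := by positivity
  set Col : Finset (Fin m → Fin r → Fin n) :=
    Finset.univ.filter (fun ω => ∃ σ : Fin n → Fin k, ∀ i, ¬ MonoT σ (ω i)) with hCol
  have hprob : uniformProb (Finset.univ : Finset (Fin m → Fin r → Fin n))
        (fun ω => ∃ σ : Fin n → Fin k, ∀ i, ¬ MonoT σ (ω i)) = Col.card / N := by
    rw [uniformProb, hN]; simp [hCol]; congr!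
  rw [hprob]
  rcases B.eq_empty_or_nonempty with hBe | hBne
  · rw [hBe]; simp; positivity
  let w : (Fin n → Fin k) → ℝ := fun σ => (1 - monoDensity r σ) ^ m
  have hw : ∀ σ ∈ B, 0 < w σ := fun σ hσ => by
    have := monoDensity_le (r := r) (by omega) hn σ a (hB σ hσ)
    exact pow_pos (by linarith) m
  let I : (Fin n → Fin k) → (Fin m → Fin r → Fin n) → ℝ :=
    fun σ ω => if ∀ i, ¬ MonoT σ (ω i) then 1 else 0
  have hI1 : ∀ σ, ∑ ω, I σ ω = N * w σ := fun σ => by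
    simp only [I, Finset.sum_boole]
    rw [card_forall_tuple (fun e => ¬ MonoT σ e)]
    push_cast
    rw [card_proper hr0 hn, mul_pow]
  have hI2 : ∀ σ τ, ∑ ω, I σ ω * I τ ω = N * (1 - monoDensity r σ - monoDensity r τ +
      monoDensity r (fun v => (σ v, τ v))) ^ m := fun σ τ => by
    have : ∀ ω, I σ ω * I τ ω = if ∀ i, ¬ MonoT σ (ω i) ∧ ¬ MonoT τ (ω i) then 1 else 0 := by
      intro ω
      simp only [I, forall_and]
      split_ifs <;> simp_all
    simp only [this, Finset.sum_boole]
    rw [card_forall_tuple (fun e => ¬ MonoT σ e ∧ ¬ MonoT τ e)]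
    push_cast
    rw [card_both_proper hr0 hn, mul_pow]
  let Z : (Fin m → Fin r → Fin n) → ℝ := fun ω => ∑ σ ∈ B, I σ ω / w σ
  have hZ1 : ∑ ω, Z ω = N * B.card := by
    simp only [Z]
    rw [Finset.sum_comm]
    have : ∀ σ ∈ B, ∑ ω, I σ ω / w σ = N := fun σ hσ => by
      rw [← Finset.sum_div, hI1, mul_div_assoc, div_self (hw σ hσ).ne', mul_one]
    rw [Finset.sum_congr rfl this]; simp; ring
  have hZ2 : ∑ ω, Z ω ^ 2 ≤ N * B.card * ((k : ℝ) ^ n * ((n : ℝ) + 1) ^ (k * k)) := by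
    have h1 : ∑ ω, Z ω ^ 2 = ∑ σ ∈ B, ∑ τ ∈ B, (∑ ω, I σ ω * I τ ω) / (w σ * w τ) := by
      simp only [Z, sq, Finset.sum_mul_sum]
      rw [Finset.sum_comm]
      refine Finset.sum_congr rfl fun σ _ => ?_
      rw [Finset.sum_comm]
      refine Finset.sum_congr rfl fun τ _ => ?_
      rw [Finset.sum_div]
      refine Finset.sum_congr rfl fun ω _ => ?_
      rw [div_mul_div_comm]
    rw [h1]
    have h2 : ∀ σ ∈ B, ∑ τ ∈ B, (∑ ω, I σ ω * I τ ω) / (w σ * w τ) ≤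
        N * ((k : ℝ) ^ n * ((n : ℝ) + 1) ^ (k * k)) := by
      intro σ hσ
      calc ∑ τ ∈ B, (∑ ω, I σ ω * I τ ω) / (w σ * w τ)
          ≤ ∑ τ ∈ B, N * ((k : ℝ) ^ n * ∏ v, ((ov σ τ (σ v) (τ v) : ℝ) / cls σ (σ v))) := by
            refine Finset.sum_le_sum fun τ hτ => ?_
            rw [hI2, div_le_iff₀ (mul_pos (hw σ hσ) (hw τ hτ))]
            have := pair_ratio_le hr hn e a he2 hk4 hk ha1 hm σ τ (hB σ hσ) (hB τ hτ)
            calc _ ≤ N * _ := mul_le_mul_of_nonneg_left this hN0.le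
              _ = _ := by simp only [w]; ring
        _ ≤ ∑ τ, N * ((k : ℝ) ^ n * ∏ v, ((ov σ τ (σ v) (τ v) : ℝ) / cls σ (σ v))) :=
            Finset.sum_le_sum_of_subset_of_nonneg (Finset.subset_univ _)
              (fun τ _ _ => by positivity)
        _ = N * ((k : ℝ) ^ n * ∑ τ, ∏ v, ((ov σ τ (σ v) (τ v) : ℝ) / cls σ (σ v))) := by
            simp only [Finset.mul_sum]
        _ ≤ _ := by gcongr; exact sum_prod_overlap_le σ
    calc _ ≤ ∑ σ ∈ B, N * ((k : ℝ) ^ n * ((n : ℝ) + 1) ^ (k * k)) := Finset.sum_le_sum h2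
      _ = _ := by simp; ring
  have hCS : (∑ ω, Z ω) ^ 2 ≤ Col.card * ∑ ω, Z ω ^ 2 := by
    have hsupp : ∑ ω, Z ω = ∑ ω ∈ Col, 1 * Z ω := by
      simp only [one_mul]
      symm
      refine Finset.sum_subset (Finset.subset_univ _) fun ω _ hω => ?_
      refine Finset.sum_eq_zero fun σ _ => ?_
      have : ¬ ∀ i, ¬ MonoT σ (ω i) := fun h =>
        hω (Finset.mem_filter.2 ⟨Finset.mem_univ _, σ, h⟩)
      simp [I, this]
    rw [hsupp]
    refine (Finset.sum_mul_sq_le_sq_mul_sq Col _ _).trans ?_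
    simp only [one_pow, Finset.sum_const, nsmul_eq_mul, mul_one]
    gcongr
    exact Finset.subset_univ _
  have hBpos : (0 : ℝ) < B.card := by exact_mod_cast hBne.card_pos
  rw [hZ1] at hCS
  have hfin : (N * B.card) * (N * B.card) ≤
      (N * B.card) * (Col.card * ((k : ℝ) ^ n * ((n : ℝ) + 1) ^ (k * k))) := by
    calc _ = (N * B.card) ^ 2 := by ring
      _ ≤ _ := hCS
      _ ≤ Col.card * (N * B.card * ((k : ℝ) ^ n * ((n : ℝ) + 1) ^ (k * k))) := by gcongr
      _ = _ := by ring
  have := le_of_mul_le_mul_left hfin (by positivity)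
  rw [← mul_div_assoc, le_div_iff₀ hN0]
  linarith

/-- Chernoff bound: few colourings have a class that is larger than `(1 + β) n / k`. -/
lemma card_unbalanced_le {n k : ℕ} (hk : 0 < k) (β : ℝ) (hβ : 0 < β) :
    ((Finset.univ.filter (fun σ : Fin n → Fin k =>
        ¬ ∀ i, (cls σ i : ℝ) ≤ (1 + β) / k * n)).card : ℝ) ≤
      (k : ℝ) ^ n * (k * rexp (-(β ^ 2 / (4 * (1 + β / 2)) / k) * n)) := by
  have hk' : (0 : ℝ) < k := by exact_mod_cast hk
  set x := β / 2 with hx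
  have hx0 : 0 < x := by positivity
  have hone : ∀ i : Fin k, ((Finset.univ.filter (fun σ : Fin n → Fin k =>
      (1 + β) / k * n < (cls σ i : ℝ))).card : ℝ) ≤
      (k : ℝ) ^ n * rexp (-(β ^ 2 / (4 * (1 + x)) / k) * n) := by
    intro i
    have hgen : ∑ σ : Fin n → Fin k, (1 + x) ^ (cls σ i) = (k + x) ^ n := by
      have h1 : ∀ σ : Fin n → Fin k, (1 + x) ^ (cls σ i) =
          ∏ v, (if σ v = i then 1 + x else 1) := by
        intro σ
        rw [Finset.prod_ite]; simp [cls]; congr!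
      simp only [h1]
      have h2 := Finset.prod_univ_sum (fun _ : Fin n => (Finset.univ : Finset (Fin k)))
        (fun _ j => if j = i then 1 + x else 1)
      rw [Fintype.piFinset_univ] at h2
      rw [← h2]
      have h3 : ∑ j : Fin k, (if j = i then 1 + x else 1) = k + x := by
        have : ∀ j : Fin k, (if j = i then 1 + x else 1) = 1 + (if j = i then x else 0) := by
          intro j; split_ifs <;> simp
        simp [this, Finset.sum_add_distrib]
      simp [h3]
    have hmark : ((Finset.univ.filter (fun σ : Fin n → Fin k =>
        (1 + β) / k * n < (cls σ i : ℝ))).card : ℝ) *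
        rexp (log (1 + x) * ((1 + β) / k * n)) ≤ (k + x) ^ n := by
      rw [← hgen, ← nsmul_eq_mul]
      refine le_trans (Finset.card_nsmul_le_sum _ (fun σ => (1 + x) ^ (cls σ i)) _ fun σ hσ => ?_)
        (Finset.sum_le_sum_of_subset_of_nonneg (Finset.subset_univ _)
          (fun σ _ _ => by positivity))
      have h := (Finset.mem_filter.1 hσ).2
      calc rexp (log (1 + x) * ((1 + β) / k * n)) ≤ rexp (log (1 + x) * (cls σ i)) := by
            have : 0 ≤ log (1 + x) := Real.log_nonneg (by linarith)
            gcongr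
        _ = (1 + x) ^ (cls σ i) := by
            rw [Real.exp_mul, Real.exp_log (by positivity), Real.rpow_natCast]
    have hlog : x / (1 + x) ≤ log (1 + x) := by
      have := Real.one_sub_inv_le_log_of_pos (x := 1 + x) (by positivity)
      have h2 : 1 - (1 + x)⁻¹ = x / (1 + x) := by field_simp; ring
      linarith
    have hkx : ((k : ℝ) + x) ^ n ≤ (k : ℝ) ^ n * rexp (x / k * n) := by
      have : (k : ℝ) + x ≤ k * rexp (x / k) := by
        have := Real.add_one_le_exp (x / k)
        calc (k : ℝ) + x = k * (x / k + 1) := by field_simp; ring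
          _ ≤ _ := by gcongr
      calc ((k : ℝ) + x) ^ n ≤ (k * rexp (x / k)) ^ n := by gcongr
        _ = _ := by rw [mul_pow, ← Real.exp_nat_mul]; ring_nf
    rw [← le_div_iff₀ (Real.exp_pos _)] at hmark
    refine hmark.trans ?_
    rw [div_le_iff₀ (Real.exp_pos _), mul_assoc, ← Real.exp_add]
    refine hkx.trans ?_
    gcongr
    have h1 : x / (1 + x) * ((1 + β) / k * n) ≤ log (1 + x) * ((1 + β) / k * n) := by gcongr
    have h2 : x / k * n = -(β ^ 2 / (4 * (1 + x)) / k) * n + x / (1 + x) * ((1 + β) / k * n) := by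
      rw [hx]; field_simp; ring
    linarith
  have hsub : (Finset.univ.filter (fun σ : Fin n → Fin k =>
        ¬ ∀ i, (cls σ i : ℝ) ≤ (1 + β) / k * n)) ⊆
      Finset.univ.biUnion (fun i => Finset.univ.filter (fun σ : Fin n → Fin k =>
        (1 + β) / k * n < (cls σ i : ℝ))) := by
    intro σ hσ
    have := (Finset.mem_filter.1 hσ).2
    push Not at this
    obtain ⟨i, hi⟩ := this
    exact Finset.mem_biUnion.2 ⟨i, Finset.mem_univ _, Finset.mem_filter.2 ⟨Finset.mem_univ _, hi⟩⟩
  calc _ ≤ ((Finset.univ.biUnion (fun i => Finset.univ.filter (fun σ : Fin n → Fin k =>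
        (1 + β) / k * n < (cls σ i : ℝ)))).card : ℝ) := by exact_mod_cast Finset.card_le_card hsub
    _ ≤ ∑ i : Fin k, ((Finset.univ.filter (fun σ : Fin n → Fin k =>
        (1 + β) / k * n < (cls σ i : ℝ))).card : ℝ) := by exact_mod_cast Finset.card_biUnion_le
    _ ≤ ∑ i : Fin k, (k : ℝ) ^ n * rexp (-(β ^ 2 / (4 * (1 + x)) / k) * n) :=
        Finset.sum_le_sum fun i _ => hone i
    _ = _ := by simp; ring

lemma tendsto_exp_neg_mul_nat (κ : ℝ) (hκ : 0 < κ) :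
    Tendsto (fun n : ℕ => rexp (-κ * n)) atTop (nhds 0) := by
  refine Real.tendsto_exp_atBot.comp ?_
  exact (tendsto_natCast_atTop_atTop (R := ℝ)).const_mul_atTop_of_neg (by linarith)

/-- The random tuple hypergraph is `k`-colourable with at least inverse polynomial probability. -/
lemma colorable_prob_poly {r k : ℕ} (hr : 3 ≤ r) (e c β : ℝ) (hβ : 0 < β)
    (he2 : 2 ≤ e * log k) (hk4 : 4 ≤ log k)
    (hk : 8 * (r : ℝ) ^ 2 * log k ≤ k) (ha1 : ((1 + β) / k) ^ (r - 1) < 1)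
    (hc : c * ((1 + β) / k) ^ (r - 1) / (1 - ((1 + β) / k) ^ (r - 1)) ^ 2 ≤ (1 - e) * log k)
    (m : ℕ → ℕ) (hm : ∀ n, (m n : ℝ) ≤ c * n) :
    ∀ᶠ n : ℕ in atTop, 1 / 2 ≤ ((n : ℝ) + 1) ^ (k * k) *
      uniformProb (Finset.univ : Finset (Fin (m n) → Fin r → Fin n))
        (fun ω => ∃ σ : Fin n → Fin k, ∀ i, ¬ MonoT σ (ω i)) := by
  have hk0 : 0 < k := by
    rcases Nat.eq_zero_or_pos k with h | h
    · subst h; norm_num at hk4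
    · exact h
  have hk' : (0 : ℝ) < k := by exact_mod_cast hk0
  have hlim := (tendsto_exp_neg_mul_nat (β ^ 2 / (4 * (1 + β / 2)) / k) (by positivity)).const_mul
    (k : ℝ)
  rw [mul_zero] at hlim
  filter_upwards [hlim.eventually (gt_mem_nhds (show (0 : ℝ) < 1 / 2 by norm_num)),
    eventually_gt_atTop 0] with n hn hn0
  have hn' : (0 : ℝ) < n := by exact_mod_cast hn0
  set B := Finset.univ.filter (fun σ : Fin n → Fin k =>
    ∀ i, (cls σ i : ℝ) ≤ (1 + β) / k * n) with hBdef
  have hmn : (m n : ℝ) * ((1 + β) / k) ^ (r - 1) / (1 - ((1 + β) / k) ^ (r - 1)) ^ 2 ≤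
      (1 - e) * log k * n := by
    calc _ ≤ (c * n) * ((1 + β) / k) ^ (r - 1) / (1 - ((1 + β) / k) ^ (r - 1)) ^ 2 := by
          gcongr; exact hm n
      _ = (c * ((1 + β) / k) ^ (r - 1) / (1 - ((1 + β) / k) ^ (r - 1)) ^ 2) * n := by ring
      _ ≤ _ := by gcongr
  have h1 := colorable_prob_ge (m := m n) hr hn0 e ((1 + β) / k) he2 hk4 hk ha1 hmn B
    (fun σ hσ => (Finset.mem_filter.1 hσ).2)
  have h2 := card_unbalanced_le (n := n) hk0 β hβ
  have h3 := Finset.card_filter_add_card_filter_not (s := (Finset.univ : Finset (Fin n → Fin k)))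
    (fun σ => ∀ i, (cls σ i : ℝ) ≤ (1 + β) / k * n)
  have h4 := congrArg (Nat.cast (R := ℝ)) h3
  push_cast at h4
  simp only [Finset.card_univ, Fintype.card_pi, Fintype.card_fin, Finset.prod_const,
    Nat.cast_pow] at h4
  have hkn : (0 : ℝ) < (k : ℝ) ^ n := by positivity
  have h5 := mul_le_mul_of_nonneg_left hn.le hkn.le
  have h6 : (k : ℝ) ^ n * (1 / 2) ≤ (k : ℝ) ^ n * (((n : ℝ) + 1) ^ (k * k) *
      uniformProb (Finset.univ : Finset (Fin (m n) → Fin r → Fin n))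
        (fun ω => ∃ σ : Fin n → Fin k, ∀ i, ¬ MonoT σ (ω i))) := by
    rw [← mul_assoc]
    refine le_trans ?_ h1
    linarith
  exact le_of_mul_le_mul_left h6 hkn

/-! ### Concentration under bounded differences -/

lemma exp_mul_le_chord (t u : ℝ) (hu : |u| ≤ 1) :
    rexp (t * u) ≤ Real.cosh t + u * Real.sinh t := by
  obtain ⟨h1, h2⟩ := abs_le.1 hu
  have h := convexOn_exp.2 (Set.mem_univ t) (Set.mem_univ (-t))
    (show 0 ≤ (1 + u) / 2 by linarith) (show 0 ≤ (1 - u) / 2 by linarith) (by ring)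
  simp only [smul_eq_mul] at h
  rw [Real.cosh_eq, Real.sinh_eq]
  calc rexp (t * u) = rexp ((1 + u) / 2 * t + (1 - u) / 2 * -t) := by ring_nf
    _ ≤ _ := h
    _ = _ := by ring

/-- One-step Hoeffding bound for a finite uniform average. -/
lemma sum_exp_le_of_near_mean {T : Type*} [Fintype T] [Nonempty T] (f : T → ℝ)
    (hf : ∀ x y, |f x - f y| ≤ 1) (t : ℝ) :
    ∑ x, rexp (t * f x) ≤
      Fintype.card T * rexp (t * ((∑ x, f x) / Fintype.card T) + t ^ 2 / 2) := by
  have hT : (0 : ℝ) < Fintype.card T := by exact_mod_cast Fintype.card_pos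
  set μ := (∑ x, f x) / Fintype.card T with hμ
  have hμsum : ∑ x, (f x - μ) = 0 := by
    rw [Finset.sum_sub_distrib]
    simp only [Finset.sum_const, Finset.card_univ, nsmul_eq_mul]
    rw [hμ]; field_simp; ring
  have hnear : ∀ x, |f x - μ| ≤ 1 := by
    intro x
    have h : f x - μ = (∑ y, (f x - f y)) / Fintype.card T := by
      rw [Finset.sum_sub_distrib, hμ]
      simp only [Finset.sum_const, Finset.card_univ, nsmul_eq_mul]
      field_simp
    rw [h, abs_div, abs_of_pos hT, div_le_one hT]
    calc |∑ y, (f x - f y)| ≤ ∑ y, |f x - f y| := Finset.abs_sum_le_sum_abs _ _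
      _ ≤ ∑ y : T, (1 : ℝ) := Finset.sum_le_sum fun y _ => hf x y
      _ = _ := by simp
  calc ∑ x, rexp (t * f x) = ∑ x, rexp (t * μ) * rexp (t * (f x - μ)) := by
        refine Finset.sum_congr rfl fun x _ => ?_
        rw [← Real.exp_add]; ring_nf
    _ = rexp (t * μ) * ∑ x, rexp (t * (f x - μ)) := by rw [Finset.mul_sum]
    _ ≤ rexp (t * μ) * ∑ x, (Real.cosh t + (f x - μ) * Real.sinh t) := by
        gcongr with x
        exact exp_mul_le_chord t _ (hnear x)
    _ = rexp (t * μ) * (Fintype.card T * Real.cosh t) := by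
        rw [Finset.sum_add_distrib, ← Finset.sum_mul, hμsum]; simp
    _ ≤ rexp (t * μ) * (Fintype.card T * rexp (t ^ 2 / 2)) := by
        gcongr; exact Real.cosh_le_exp_half_sq t
    _ = _ := by rw [Real.exp_add]; ring

/-- Azuma–Hoeffding bound for the moment generating function of a function on a product space that
changes by at most `1` when one coordinate is changed. -/
lemma bounded_diff_mgf {T : Type*} [Fintype T] [Nonempty T] (t : ℝ) (m : ℕ) :
    ∀ f : (Fin m → T) → ℝ, (∀ ω i x, |f ω - f (Function.update ω i x)| ≤ 1) →
      ∑ ω, rexp (t * f ω) ≤ (Fintype.card T : ℝ) ^ m *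
        rexp (t * ((∑ ω, f ω) / (Fintype.card T : ℝ) ^ m) + t ^ 2 / 2 * m) := by
  have hT : (0 : ℝ) < Fintype.card T := by exact_mod_cast Fintype.card_pos
  induction m with
  | zero => intro f _; simp
  | succ m ih =>
    intro f hf
    let g : (Fin m → T) → ℝ := fun ω => (∑ x, f (Fin.cons x ω)) / Fintype.card T
    have hsplit : ∀ F : (Fin (m + 1) → T) → ℝ, ∑ ω, F ω = ∑ ω : Fin m → T, ∑ x, F (Fin.cons x ω) := by
      intro F
      rw [← (Fin.consEquiv (fun _ : Fin (m + 1) => T)).sum_comp, Fintype.sum_prod_type,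
        Finset.sum_comm]
      rfl
    have hg : ∀ ω i x, |g ω - g (Function.update ω i x)| ≤ 1 := by
      intro ω i x
      simp only [g]
      rw [← sub_div, ← Finset.sum_sub_distrib, abs_div, abs_of_pos hT, div_le_one hT]
      refine (Finset.abs_sum_le_sum_abs _ _).trans ?_
      calc _ ≤ ∑ y : T, (1 : ℝ) := by
            refine Finset.sum_le_sum fun y _ => ?_
            have := hf (Fin.cons y ω) i.succ x
            rwa [← Fin.cons_update] at this
        _ = _ := by simp
    have hih := ih g hg
    have hmean : (∑ ω, g ω) / (Fintype.card T : ℝ) ^ m =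
        (∑ ω, f ω) / (Fintype.card T : ℝ) ^ (m + 1) := by
      rw [hsplit f]
      simp only [g]
      rw [← Finset.sum_div, div_div, pow_succ, mul_comm]
    rw [hsplit]
    calc ∑ ω : Fin m → T, ∑ x, rexp (t * f (Fin.cons x ω))
        ≤ ∑ ω : Fin m → T, Fintype.card T * rexp (t * g ω + t ^ 2 / 2) := by
          refine Finset.sum_le_sum fun ω _ => ?_
          refine sum_exp_le_of_near_mean (fun x => f (Fin.cons x ω)) (fun x y => ?_) t
          have := hf (Fin.cons x ω) 0 y
          rwa [Fin.update_cons_zero] at this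
      _ = Fintype.card T * rexp (t ^ 2 / 2) * ∑ ω, rexp (t * g ω) := by
          rw [Finset.mul_sum]
          refine Finset.sum_congr rfl fun ω _ => ?_
          rw [Real.exp_add]; ring
      _ ≤ Fintype.card T * rexp (t ^ 2 / 2) * ((Fintype.card T : ℝ) ^ m *
            rexp (t * ((∑ ω, g ω) / (Fintype.card T : ℝ) ^ m) + t ^ 2 / 2 * m)) := by gcongr
      _ = _ := by
          rw [hmean]
          push_cast
          rw [show t ^ 2 / 2 * ((m : ℝ) + 1) = t ^ 2 / 2 * m + t ^ 2 / 2 by ring, ← add_assoc,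
            Real.exp_add (_ + _) (t ^ 2 / 2)]
          ring

/-- If `f` has bounded differences then `P(f = 0) P(f ≥ s) ≤ exp(t² m - t s)`: the unknown mean
cancels between the moment generating functions at `t` and `-t`. -/
lemma prob_zero_mul_prob_ge {T : Type*} [Fintype T] [Nonempty T] (m : ℕ) (f : (Fin m → T) → ℝ)
    (hf : ∀ ω i x, |f ω - f (Function.update ω i x)| ≤ 1) (t s : ℝ) (ht : 0 ≤ t) :
    uniformProb (Finset.univ : Finset (Fin m → T)) (fun ω => f ω = 0) *
      uniformProb (Finset.univ : Finset (Fin m → T)) (fun ω => s ≤ f ω) ≤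
        rexp (t ^ 2 * m - t * s) := by
  have hT : (0 : ℝ) < Fintype.card T := by exact_mod_cast Fintype.card_pos
  set N : ℝ := (Fintype.card T : ℝ) ^ m with hN
  have hN0 : 0 < N := by positivity
  set μ := (∑ ω, f ω) / N with hμ
  have hcard : ((Finset.univ : Finset (Fin m → T)).card : ℝ) = N := by simp [hN]
  have h1 : uniformProb (Finset.univ : Finset (Fin m → T)) (fun ω => f ω = 0) ≤
      rexp (-t * μ + t ^ 2 / 2 * m) := by
    rw [uniformProb, hcard, div_le_iff₀ hN0, mul_comm]
    have h := bounded_diff_mgf (-t) m f hf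
    rw [← hN, ← hμ, neg_sq] at h
    refine le_trans ?_ h
    calc _ = ∑ ω ∈ Finset.univ.filter (fun ω => f ω = 0), rexp (-t * f ω) := by
          rw [Finset.sum_congr rfl (g := fun _ => (1 : ℝ))]
          · simp
          · intro ω hω; rw [(Finset.mem_filter.1 hω).2]; simp
      _ ≤ _ := Finset.sum_le_sum_of_subset_of_nonneg (Finset.subset_univ _)
          (fun _ _ _ => (Real.exp_pos _).le)
  have h2 : uniformProb (Finset.univ : Finset (Fin m → T)) (fun ω => s ≤ f ω) ≤
      rexp (t * μ + t ^ 2 / 2 * m - t * s) := by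
    rw [uniformProb, hcard, div_le_iff₀ hN0, mul_comm]
    have h := bounded_diff_mgf t m f hf
    rw [← hN, ← hμ] at h
    rw [Real.exp_sub, ← mul_div_assoc, le_div_iff₀ (Real.exp_pos _)]
    refine le_trans ?_ h
    rw [← nsmul_eq_mul]
    refine le_trans (Finset.card_nsmul_le_sum _ (fun ω => rexp (t * f ω)) _ fun ω hω => ?_)
      (Finset.sum_le_sum_of_subset_of_nonneg (Finset.subset_univ _)
          (fun _ _ _ => (Real.exp_pos _).le))
    have := (Finset.mem_filter.1 hω).2
    gcongr
  calc _ ≤ rexp (-t * μ + t ^ 2 / 2 * m) * rexp (t * μ + t ^ 2 / 2 * m - t * s) := by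
        gcongr
        rw [uniformProb]; positivity
    _ = _ := by rw [← Real.exp_add]; ring_nf

/-! ### Elementary properties of the uniform probability -/

lemma uniformProb_eq {α : Type*} (F : Finset α) (P : α → Prop) [DecidablePred P] :
    uniformProb F P = ((F.filter P).card : ℝ) / F.card := by
  rw [uniformProb]; congr!

lemma uniformProb_nonneg {α : Type*} (F : Finset α) (P : α → Prop) : 0 ≤ uniformProb F P := by
  rw [uniformProb]; positivity

lemma uniformProb_mono {α : Type*} (F : Finset α) {P Q : α → Prop} (h : ∀ x ∈ F, P x → Q x) :
    uniformProb F P ≤ uniformProb F Q := by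
  rw [uniformProb, uniformProb]
  gcongr with x hx
  exact h x hx

lemma uniformProb_or_le {α : Type*} (F : Finset α) (P Q : α → Prop) :
    uniformProb F (fun x => P x ∨ Q x) ≤ uniformProb F P + uniformProb F Q := by
  rw [uniformProb_eq, uniformProb_eq, uniformProb_eq, ← add_div]
  gcongr
  have h : F.filter (fun x => P x ∨ Q x) = F.filter P ∪ F.filter Q := by
    ext x
    simp only [Finset.mem_filter, Finset.mem_union]
    tauto
  rw [h]
  exact_mod_cast Finset.card_union_le _ _

lemma uniformProb_exists_le {α ι : Type*} (F : Finset α) (s : Finset ι) (P : ι → α → Prop) :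
    uniformProb F (fun x => ∃ i ∈ s, P i x) ≤ ∑ i ∈ s, uniformProb F (P i) := by
  simp only [uniformProb]
  rw [← Finset.sum_div]
  gcongr
  have : F.filter (fun x => ∃ i ∈ s, P i x) ⊆ s.biUnion (fun i => F.filter (P i)) := by
    intro x hx
    rw [Finset.mem_filter] at hx
    obtain ⟨hx, i, hi, hP⟩ := hx
    exact Finset.mem_biUnion.2 ⟨i, hi, Finset.mem_filter.2 ⟨hx, hP⟩⟩
  exact_mod_cast (Finset.card_le_card this).trans Finset.card_biUnion_le

/-! ### Sparse sets are colourable with `r` colours -/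

/-- Indices of the tuples of `ω` all of whose entries lie in `W`. -/
noncomputable def inside {m r n : ℕ} (ω : Fin m → Fin r → Fin n) (W : Finset (Fin n)) :
    Finset (Fin m) :=
  Finset.univ.filter (fun i => ∀ a, ω i a ∈ W)

lemma mem_inside {m r n : ℕ} {ω : Fin m → Fin r → Fin n} {W : Finset (Fin n)} {i : Fin m} :
    i ∈ inside ω W ↔ ∀ a, ω i a ∈ W := by
  rw [inside, Finset.mem_filter]; simp

/-- If every nonempty `W ⊆ U` contains fewer than `|W|` tuples then some vertex of `U` lies in fewer
than `r` of the tuples inside `U`, so that the tuples inside `U` can be coloured greedily. -/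
lemma exists_coloring_of_sparse {m r n : ℕ} (hr : 0 < r) (ω : Fin m → Fin r → Fin n) :
    ∀ (u : ℕ) (U : Finset (Fin n)), U.card = u →
      (∀ W ⊆ U, W.Nonempty → (inside ω W).card < W.card) →
      ∃ c : Fin n → Fin r, ∀ i ∈ inside ω U, ¬ MonoT c (ω i) := by
  intro u
  induction u with
  | zero =>
    intro U hU _
    refine ⟨fun _ => ⟨0, hr⟩, fun i hi => ?_⟩
    have := mem_inside.1 hi ⟨0, hr⟩
    rw [Finset.card_eq_zero.1 hU] at this
    simp at this
  | succ u ih =>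
    intro U hU hsp
    have hne : U.Nonempty := Finset.card_pos.1 (by omega)
    obtain ⟨v, hvU, hv⟩ : ∃ v ∈ U, ((inside ω U).filter (fun i => ∃ a, ω i a = v)).card < r := by
      by_contra! hcon
      have h1 : U.card * r ≤ ∑ v ∈ U, ((inside ω U).filter (fun i => ∃ a, ω i a = v)).card := by
        rw [← smul_eq_mul]; exact Finset.card_nsmul_le_sum _ _ _ hcon
      have h2 : ∑ v ∈ U, ((inside ω U).filter (fun i => ∃ a, ω i a = v)).card =
          ∑ i ∈ inside ω U, (U.filter (fun v => ∃ a, ω i a = v)).card := by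
        simp only [Finset.card_filter]
        rw [Finset.sum_comm]
      have h3 : ∀ i ∈ inside ω U, (U.filter (fun v => ∃ a, ω i a = v)).card ≤ r := by
        intro i _
        calc _ ≤ (Finset.univ.image (ω i)).card := by
              refine Finset.card_le_card fun v hv => ?_
              obtain ⟨a, ha⟩ := (Finset.mem_filter.1 hv).2
              exact Finset.mem_image.2 ⟨a, Finset.mem_univ _, ha⟩
          _ ≤ r := by simpa using Finset.card_image_le (s := Finset.univ) (f := ω i)
      have h4 := Finset.sum_le_card_nsmul _ _ _ h3
      have h5 := hsp U subset_rfl hne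
      rw [smul_eq_mul] at h4
      have h6 : U.card * r ≤ (inside ω U).card * r := by rw [h2] at h1; exact h1.trans h4
      exact absurd (Nat.le_of_mul_le_mul_right h6 hr) (by omega)
    obtain ⟨c, hc⟩ := ih (U.erase v) (by rw [Finset.card_erase_of_mem hvU]; omega)
      (fun W hW => hsp W (hW.trans (Finset.erase_subset _ _)))
    set I := (inside ω U).filter (fun i => ∃ a, ω i a = v) with hI
    have hw : ∀ i : Fin m, ∃ a, ω i a ≠ v := by
      intro i
      by_contra! hcon
      have h1 := hsp {v} (by simpa using hvU) (by simp)
      have h2 : i ∈ inside ω {v} := mem_inside.2 (by simpa using hcon)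
      have := Finset.card_pos.2 ⟨i, h2⟩
      simp at h1
      rw [h1] at h2
      simp at h2
    choose a ha using hw
    obtain ⟨q, hq⟩ : ∃ q : Fin r, q ∉ I.image (fun i => c (ω i (a i))) := by
      by_contra! hcon
      have h1 : (Finset.univ : Finset (Fin r)) ⊆ I.image (fun i => c (ω i (a i))) :=
        fun q _ => hcon q
      have h2 := (Finset.card_le_card h1).trans Finset.card_image_le
      simp at h2
      omega
    refine ⟨Function.update c v q, fun i hi hmono => ?_⟩
    obtain ⟨j, hj⟩ := hmono
    by_cases hvi : ∃ b, ω i b = v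
    · obtain ⟨b, hb⟩ := hvi
      have h1 := hj b
      have h2 := hj (a i)
      rw [hb, Function.update_self] at h1
      rw [Function.update_of_ne (ha i)] at h2
      exact hq (Finset.mem_image.2 ⟨i, Finset.mem_filter.2 ⟨hi, ⟨b, hb⟩⟩, h2.trans h1.symm⟩)
    · push Not at hvi
      refine hc i (mem_inside.2 fun b => Finset.mem_erase.2 ⟨hvi b, mem_inside.1 hi b⟩) ⟨j, fun b => ?_⟩
      have := hj b
      rwa [Function.update_of_ne (hvi b)] at this

/-- A colouring with few monochromatic tuples is repaired by recolouring one vertex of each of these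
tuples with `r` new colours. -/
lemma exists_coloring_of_few_mono {m r n k N : ℕ} (hr : 0 < r) (ω : Fin m → Fin r → Fin n)
    (hsp : ∀ W : Finset (Fin n), W.Nonempty → W.card ≤ N → (inside ω W).card < W.card)
    (σ : Fin n → Fin k) (hσ : (Finset.univ.filter (fun i => MonoT σ (ω i))).card ≤ N) :
    ∃ c : Fin n → Fin (k + r), ∀ i, ¬ MonoT c (ω i) := by
  set U := (Finset.univ.filter (fun i => MonoT σ (ω i))).image (fun i => ω i ⟨0, hr⟩) with hU
  have hUN : U.card ≤ N := Finset.card_image_le.trans hσ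
  obtain ⟨c, hc⟩ := exists_coloring_of_sparse hr ω U.card U rfl
    (fun W hW hne => hsp W hne ((Finset.card_le_card hW).trans hUN))
  refine ⟨fun v => if v ∈ U then Fin.natAdd k (c v) else Fin.castAdd r (σ v), ?_⟩
  rintro i ⟨j, hj⟩
  beta_reduce at hj
  by_cases h0 : ω i ⟨0, hr⟩ ∈ U
  · have hall : ∀ a, ω i a ∈ U := by
      intro a
      by_contra hcon
      have h1 := (hj a).trans (hj ⟨0, hr⟩).symm
      rw [if_neg hcon, if_pos h0] at h1
      have := congrArg Fin.val h1
      simp at this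
      have := (σ (ω i a)).2
      omega
    refine hc i (mem_inside.2 hall) ⟨c (ω i ⟨0, hr⟩), fun a => ?_⟩
    have h1 := (hj a).trans (hj ⟨0, hr⟩).symm
    rw [if_pos (hall a), if_pos h0] at h1
    exact Fin.natAdd_injective _ _ h1
  · refine h0 (Finset.mem_image.2 ⟨i, Finset.mem_filter.2 ⟨Finset.mem_univ _, ?_⟩, rfl⟩)
    refine ⟨σ (ω i ⟨0, hr⟩), fun a => ?_⟩
    have h1 := (hj a).trans (hj ⟨0, hr⟩).symm
    rw [if_neg h0] at h1
    by_cases haU : ω i a ∈ U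
    · rw [if_pos haU] at h1
      have := congrArg Fin.val h1
      simp at this
      have := (σ (ω i ⟨0, hr⟩)).2
      omega
    · rw [if_neg haU] at h1
      exact Fin.castAdd_injective _ _ h1

/-! ### Small sets are sparse -/

lemma prob_inside_ge {m r n : ℕ} (hn : 0 < n) (W : Finset (Fin n)) (I : Finset (Fin m)) :
    uniformProb (Finset.univ : Finset (Fin m → Fin r → Fin n)) (fun ω => I ⊆ inside ω W) =
      ((W.card : ℝ) / n) ^ (r * I.card) := by
  have hset : (Finset.univ.filter (fun ω : Fin m → Fin r → Fin n => I ⊆ inside ω W)) =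
      Fintype.piFinset (fun i => if i ∈ I then Fintype.piFinset (fun _ : Fin r => W)
        else Finset.univ) := by
    ext ω
    rw [Finset.mem_filter, Fintype.mem_piFinset]
    constructor
    · intro h i
      split_ifs with hi
      · rw [Fintype.mem_piFinset]; exact mem_inside.1 (h.2 hi)
      · exact Finset.mem_univ _
    · intro h
      refine ⟨Finset.mem_univ _, fun i hi => mem_inside.2 ?_⟩
      have := h i
      rw [if_pos hi, Fintype.mem_piFinset] at this
      exact this
  rw [uniformProb_eq, hset, Fintype.card_piFinset]
  have hn' : (n : ℝ) ≠ 0 := by positivity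
  have hcard : ((Finset.univ : Finset (Fin m → Fin r → Fin n)).card : ℝ) =
      ∏ i : Fin m, (n : ℝ) ^ r := by simp
  rw [hcard]
  push_cast
  rw [← Finset.prod_div_distrib]
  have : ∀ i : Fin m, (((if i ∈ I then Fintype.piFinset (fun _ : Fin r => W)
        else Finset.univ).card : ℝ)) / (n : ℝ) ^ r =
      if i ∈ I then ((W.card : ℝ) / n) ^ r else 1 := by
    intro i
    split_ifs
    · simp [div_pow]
    · simp [hn']
  simp only [this]
  rw [Finset.prod_ite_mem, Finset.univ_inter, Finset.prod_const, pow_mul]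

lemma choose_mul_choose_le {m r n u : ℕ} (hr : 3 ≤ r) (hn : 0 < n) (hun : u ≤ n) (c : ℝ)
    (hc : 0 ≤ c) (hm : (m : ℝ) ≤ c * n) :
    (n.choose u : ℝ) * (m.choose u * ((u : ℝ) / n) ^ (r * u)) ≤
      (c * rexp 2 * u / n) ^ u := by
  have hn' : (0 : ℝ) < n := by exact_mod_cast hn
  have hf : (0 : ℝ) < u.factorial := by exact_mod_cast u.factorial_pos
  have h1 : (n.choose u : ℝ) ≤ (n : ℝ) ^ u / u.factorial := Nat.choose_le_pow_div u n
  have h2 : (m.choose u : ℝ) ≤ (c * n) ^ u / u.factorial :=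
    (Nat.choose_le_pow_div u m).trans (by gcongr)
  have h3 : ((u : ℝ) / n) ^ (r * u) ≤ (((u : ℝ) / n) ^ u) ^ 3 := by
    rw [← pow_mul]
    refine pow_le_pow_of_le_one (by positivity) ?_ (by nlinarith)
    rw [div_le_one hn']; exact_mod_cast hun
  have h4 : (u : ℝ) ^ u / u.factorial ≤ rexp u :=
    Real.pow_div_factorial_le_exp u (by positivity) u
  calc (n.choose u : ℝ) * (m.choose u * ((u : ℝ) / n) ^ (r * u))
      ≤ (n : ℝ) ^ u / u.factorial * ((c * n) ^ u / u.factorial * (((u : ℝ) / n) ^ u) ^ 3) := by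
        gcongr
    _ = c ^ u * ((u : ℝ) ^ u / u.factorial) ^ 2 * (u / n) ^ u := by
        rw [mul_pow, div_pow]
        field_simp
    _ ≤ c ^ u * (rexp u) ^ 2 * (u / n) ^ u := by gcongr
    _ = (c * rexp 2 * u / n) ^ u := by
        have : (rexp u) ^ 2 = rexp 2 ^ u := by
          rw [← Real.exp_nat_mul, ← Real.exp_nat_mul]; push_cast; ring_nf
        rw [this, ← mul_pow, ← mul_pow]; ring_nf

lemma prob_dense_le {m r n N : ℕ} (hr : 3 ≤ r) (hn : 0 < n) (hNn : N ≤ n) (c : ℝ)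
    (hc : 0 ≤ c) (hm : (m : ℝ) ≤ c * n) (hN : c * rexp 2 * N / n ≤ 1 / 4) :
    uniformProb (Finset.univ : Finset (Fin m → Fin r → Fin n))
      (fun ω => ∃ W : Finset (Fin n), W.Nonempty ∧ W.card ≤ N ∧ W.card ≤ (inside ω W).card) ≤
      2 * (c * rexp 2) / n := by
  have hn' : (0 : ℝ) < n := by exact_mod_cast hn
  set K := c * rexp 2 with hK
  have hK0 : 0 ≤ K := by positivity
  calc _ ≤ uniformProb (Finset.univ : Finset (Fin m → Fin r → Fin n))
          (fun ω => ∃ u ∈ Finset.range N,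
            ∃ W ∈ Finset.powersetCard (u + 1) (Finset.univ : Finset (Fin n)),
            ∃ I ∈ Finset.powersetCard (u + 1) (Finset.univ : Finset (Fin m)), I ⊆ inside ω W) := by
        refine uniformProb_mono _ fun ω _ => ?_
        rintro ⟨W, hW, hWN, hWi⟩
        have := Finset.card_pos.2 hW
        obtain ⟨I, hI, hIc⟩ := Finset.exists_subset_card_eq hWi
        refine ⟨W.card - 1, Finset.mem_range.2 (by omega), W, ?_, I, ?_, hI⟩ <;>
          rw [Finset.mem_powersetCard] <;> exact ⟨Finset.subset_univ _, by omega⟩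
    _ ≤ ∑ u ∈ Finset.range N, ∑ W ∈ Finset.powersetCard (u + 1) (Finset.univ : Finset (Fin n)),
        ∑ I ∈ Finset.powersetCard (u + 1) (Finset.univ : Finset (Fin m)),
          uniformProb (Finset.univ : Finset (Fin m → Fin r → Fin n)) (fun ω => I ⊆ inside ω W) := by
        refine (uniformProb_exists_le _ _ _).trans (Finset.sum_le_sum fun u _ => ?_)
        refine (uniformProb_exists_le _ _ _).trans (Finset.sum_le_sum fun W _ => ?_)
        exact uniformProb_exists_le _ _ _
    _ = ∑ u ∈ Finset.range N, (n.choose (u + 1) : ℝ) *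
          (m.choose (u + 1) * (((u + 1 : ℕ) : ℝ) / n) ^ (r * (u + 1))) := by
        refine Finset.sum_congr rfl fun u _ => ?_
        rw [Finset.sum_congr rfl (g := fun _ =>
          (m.choose (u + 1) * (((u + 1 : ℕ) : ℝ) / n) ^ (r * (u + 1))))]
        · simp
        intro W hW
        rw [Finset.sum_congr rfl (g := fun _ => (((u + 1 : ℕ) : ℝ) / n) ^ (r * (u + 1)))]
        · simp
        intro I hI
        rw [prob_inside_ge hn, (Finset.mem_powersetCard.1 hW).2, (Finset.mem_powersetCard.1 hI).2]
    _ ≤ ∑ u ∈ Finset.range N, K / n * (1 / 2) ^ u := by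
        refine Finset.sum_le_sum fun u hu => ?_
        have huN : u + 1 ≤ N := by have := Finset.mem_range.1 hu; omega
        refine (choose_mul_choose_le hr hn (huN.trans hNn) c hc hm).trans ?_
        have h1 : K * ((u + 1 : ℕ) : ℝ) / n ≤ 1 / 4 := by
          refine le_trans ?_ hN
          gcongr
        have h2 : ((u + 1 : ℕ) : ℝ) ≤ 2 ^ u := by
          have : u + 1 ≤ 2 ^ u := Nat.lt_two_pow_self
          exact_mod_cast this
        calc (K * ((u + 1 : ℕ) : ℝ) / n) ^ (u + 1)
            = (K * ((u + 1 : ℕ) : ℝ) / n) ^ u * (K * ((u + 1 : ℕ) : ℝ) / n) := pow_succ _ _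
          _ ≤ (1 / 4) ^ u * (K * 2 ^ u / n) := by gcongr
          _ = K / n * (1 / 2) ^ u := by
              rw [show (1 / 2 : ℝ) = 1 / 4 * 2 by norm_num, mul_pow]; ring
    _ = K / n * ∑ u ∈ Finset.range N, (1 / 2) ^ u := by rw [Finset.mul_sum]
    _ ≤ K / n * 2 := by gcongr; exact sum_geometric_two_le N
    _ = _ := by ring

/-! ### Colouring with high probability -/

/-- The least number of monochromatic tuples over all `k`-colourings. -/
noncomputable def minMono {m r n : ℕ} (k : ℕ) (ω : Fin m → Fin r → Fin n) : ℕ :=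
  sInf (Set.range fun σ : Fin n → Fin k => (Finset.univ.filter (fun i => MonoT σ (ω i))).card)

lemma exists_minMono {m r n k : ℕ} (hk : 0 < k) (ω : Fin m → Fin r → Fin n) :
    ∃ σ : Fin n → Fin k, (Finset.univ.filter (fun i => MonoT σ (ω i))).card = minMono k ω :=
  Nat.sInf_mem (s := Set.range fun σ : Fin n → Fin k =>
    (Finset.univ.filter (fun i => MonoT σ (ω i))).card) ⟨_, fun _ => ⟨0, hk⟩, rfl⟩

lemma minMono_le {m r n k : ℕ} (ω : Fin m → Fin r → Fin n) (σ : Fin n → Fin k) :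
    minMono k ω ≤ (Finset.univ.filter (fun i => MonoT σ (ω i))).card :=
  Nat.sInf_le ⟨σ, rfl⟩

lemma minMono_le_add_one {m r n k : ℕ} (hk : 0 < k) (ω ω' : Fin m → Fin r → Fin n) (i : Fin m)
    (h : ∀ j, j ≠ i → ω j = ω' j) : minMono k ω ≤ minMono k ω' + 1 := by
  obtain ⟨σ, hσ⟩ := exists_minMono hk ω'
  rw [← hσ]
  refine (minMono_le ω σ).trans (le_trans (Finset.card_le_card ?_) (Finset.card_insert_le i _))
  intro j hj
  rw [Finset.mem_insert]
  by_cases hji : j = i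
  · exact Or.inl hji
  · refine Or.inr (Finset.mem_filter.2 ⟨Finset.mem_univ _, ?_⟩)
    rw [← h j hji]
    exact (Finset.mem_filter.1 hj).2

lemma tendsto_succ_pow_mul_exp (p : ℕ) (κ : ℝ) (hκ : 0 < κ) :
    Tendsto (fun n : ℕ => ((n : ℝ) + 1) ^ p * rexp (-κ * n)) atTop (nhds 0) := by
  have h := (tendsto_pow_const_mul_const_pow_of_lt_one p (r := rexp (-κ)) (Real.exp_pos _).le
    (by rw [Real.exp_lt_one_iff]; linarith)).comp (tendsto_add_atTop_nat 1)
  have h2 := h.mul_const (rexp κ)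
  rw [zero_mul] at h2
  refine h2.congr fun n => ?_
  simp only [Function.comp]
  rw [pow_succ, mul_assoc, mul_assoc, ← Real.exp_add, neg_add_cancel, Real.exp_zero, mul_one,
    ← Real.exp_nat_mul]
  push_cast
  ring_nf

lemma not_colorable_prob_tendsto {r k : ℕ} (hr : 3 ≤ r) (e c β : ℝ) (hβ : 0 < β) (hc0 : 0 < c)
    (he2 : 2 ≤ e * log k) (hk4 : 4 ≤ log k)
    (hk : 8 * (r : ℝ) ^ 2 * log k ≤ k) (ha1 : ((1 + β) / k) ^ (r - 1) < 1)
    (hc : c * ((1 + β) / k) ^ (r - 1) / (1 - ((1 + β) / k) ^ (r - 1)) ^ 2 ≤ (1 - e) * log k)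
    (m : ℕ → ℕ) (hm : ∀ n, (m n : ℝ) ≤ c * n) :
    Tendsto (fun n : ℕ => uniformProb (Finset.univ : Finset (Fin (m n) → Fin r → Fin n))
        (fun ω => ¬ ∃ σ : Fin n → Fin (k + r), ∀ i, ¬ MonoT σ (ω i))) atTop (nhds 0) := by
  have hk0 : 0 < k := by
    rcases Nat.eq_zero_or_pos k with h | h
    · subst h; norm_num at hk4
    · exact h
  set K := c * rexp 2 with hK
  have hK0 : 0 < K := by positivity
  set δ := min 1 (1 / (4 * K)) with hδ
  have hδ0 : 0 < δ := by positivity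
  have hδ1 : δ ≤ 1 := min_le_left _ _
  have hδK : K * δ ≤ 1 / 4 := by
    calc K * δ ≤ K * (1 / (4 * K)) := by gcongr; exact min_le_right _ _
      _ = 1 / 4 := by field_simp
  have hlim1 := (tendsto_succ_pow_mul_exp (k * k) (δ ^ 2 / (4 * c)) (by positivity)).const_mul 2
  have hlim2 : Tendsto (fun n : ℕ => 2 * K / (n : ℝ)) atTop (nhds 0) :=
    tendsto_const_div_atTop_nhds_zero_nat _
  have hlim := hlim1.add hlim2
  rw [mul_zero, add_zero] at hlim
  refine squeeze_zero' (Eventually.of_forall fun n => uniformProb_nonneg _ _) ?_ hlim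
  filter_upwards [colorable_prob_poly hr e c β hβ he2 hk4 hk ha1 hc m hm, eventually_gt_atTop 0]
    with n hpoly hn0
  have hn' : (0 : ℝ) < n := by exact_mod_cast hn0
  have : NeZero n := ⟨hn0.ne'⟩
  set Ω := (Finset.univ : Finset (Fin (m n) → Fin r → Fin n)) with hΩ
  set N := ⌊δ * n⌋₊ with hN
  have hNle : (N : ℝ) ≤ δ * n := Nat.floor_le (by positivity)
  have hNn : N ≤ n := by
    have : (N : ℝ) ≤ n := hNle.trans (by nlinarith)
    exact_mod_cast this
  have hdense := prob_dense_le (m := m n) (N := N) hr hn0 hNn c hc0.le (hm n) (by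
    rw [← hK, div_le_iff₀ hn']
    calc K * N ≤ K * (δ * n) := by gcongr
      _ = K * δ * n := by ring
      _ ≤ 1 / 4 * n := by gcongr)
  have hconc := prob_zero_mul_prob_ge (T := Fin r → Fin n) (m n) (fun ω => (minMono k ω : ℝ))
    (by
      intro ω i x
      have h1 := minMono_le_add_one hk0 ω (Function.update ω i x) i
        (fun j hj => by rw [Function.update_of_ne hj])
      have h2 := minMono_le_add_one hk0 (Function.update ω i x) ω i
        (fun j hj => by rw [Function.update_of_ne hj])
      have h1' : (minMono k ω : ℝ) ≤ minMono k (Function.update ω i x) + 1 := by exact_mod_cast h1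
      have h2' : (minMono k (Function.update ω i x) : ℝ) ≤ minMono k ω + 1 := by exact_mod_cast h2
      rw [abs_le]; constructor <;> linarith) (δ / (2 * c)) (δ * n) (by positivity)
  set p := uniformProb Ω (fun ω => δ * n ≤ (minMono k ω : ℝ)) with hp
  have hp0 : 0 ≤ p := uniformProb_nonneg _ _
  have hzero : uniformProb Ω (fun ω => ∃ σ : Fin n → Fin k, ∀ i, ¬ MonoT σ (ω i)) ≤
      uniformProb Ω (fun ω => (minMono k ω : ℝ) = 0) := by
    refine uniformProb_mono _ fun ω _ => ?_
    rintro ⟨σ, hσ⟩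
    have := minMono_le ω σ
    rw [Finset.filter_false_of_mem (fun i _ => hσ i)] at this
    simpa using this
  have hexp : (δ / (2 * c)) ^ 2 * (m n) - δ / (2 * c) * (δ * n) ≤ -(δ ^ 2 / (4 * c)) * n := by
    have h1 : (δ / (2 * c)) ^ 2 * (m n : ℝ) ≤ (δ / (2 * c)) ^ 2 * (c * n) := by
      gcongr; exact hm n
    have h2 : (δ / (2 * c)) ^ 2 * (c * n) - δ / (2 * c) * (δ * n) = -(δ ^ 2 / (4 * c)) * n := by
      field_simp; ring
    linarith
  have hpbound : p ≤ 2 * (((n : ℝ) + 1) ^ (k * k) * rexp (-(δ ^ 2 / (4 * c)) * n)) := by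
    have h1 : 1 / 2 * p ≤ ((n : ℝ) + 1) ^ (k * k) * rexp (-(δ ^ 2 / (4 * c)) * n) := by
      calc 1 / 2 * p ≤ ((n : ℝ) + 1) ^ (k * k) *
            uniformProb Ω (fun ω => ∃ σ : Fin n → Fin k, ∀ i, ¬ MonoT σ (ω i)) * p := by gcongr
        _ ≤ ((n : ℝ) + 1) ^ (k * k) *
            uniformProb Ω (fun ω => (minMono k ω : ℝ) = 0) * p := by gcongr
        _ = ((n : ℝ) + 1) ^ (k * k) *
            (uniformProb Ω (fun ω => (minMono k ω : ℝ) = 0) * p) := by ring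
        _ ≤ _ := by
            gcongr
            exact hconc.trans (Real.exp_le_exp.2 hexp)
    linarith
  calc _ ≤ uniformProb Ω (fun ω => δ * n ≤ (minMono k ω : ℝ) ∨
          ∃ W : Finset (Fin n), W.Nonempty ∧ W.card ≤ N ∧ W.card ≤ (inside ω W).card) := by
        refine uniformProb_mono _ fun ω _ hω => ?_
        by_contra! hcon
        obtain ⟨h1, h2⟩ := hcon
        obtain ⟨σ, hσ⟩ := exists_minMono hk0 ω
        refine hω (exists_coloring_of_few_mono (N := N) (by omega) ω h2 σ ?_)
        rw [hσ]
        exact Nat.le_floor h1.le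
    _ ≤ p + _ := uniformProb_or_le _ _ _
    _ ≤ _ := add_le_add hpbound hdense

/-! ### Large independent sets do not exist -/

lemma prob_indep_le {m r n : ℕ} (hn : 0 < n) (S : Finset (Fin n)) :
    uniformProb (Finset.univ : Finset (Fin m → Fin r → Fin n))
      (fun ω => ∀ i, ¬ ∀ a, ω i a ∈ S) ≤ rexp (-(((S.card : ℝ) / n) ^ r * m)) := by
  have hn' : (0 : ℝ) < n := by exact_mod_cast hn
  have hcomp : (Finset.univ.filter (fun e : Fin r → Fin n => ¬ ∀ a, e a ∈ S)).card + S.card ^ r =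
      n ^ r := by
    have h1 : (Finset.univ.filter (fun e : Fin r → Fin n => ∀ a, e a ∈ S)).card = S.card ^ r := by
      have : (Finset.univ.filter (fun e : Fin r → Fin n => ∀ a, e a ∈ S)) =
          Fintype.piFinset (fun _ => S) := by
        ext e; rw [Finset.mem_filter, Fintype.mem_piFinset]; simp
      rw [this]; simp
    have h2 := Finset.card_filter_add_card_filter_not (s := (Finset.univ : Finset (Fin r → Fin n)))
      (fun e : Fin r → Fin n => ∀ a, e a ∈ S)
    rw [h1] at h2
    rw [add_comm]
    simpa using h2
  rw [uniformProb_eq, card_forall_tuple (fun e : Fin r → Fin n => ¬ ∀ a, e a ∈ S)]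
  have hcomp' : ((Finset.univ.filter (fun e : Fin r → Fin n => ¬ ∀ a, e a ∈ S)).card : ℝ) =
      n ^ r - (S.card : ℝ) ^ r := by
    rw [eq_sub_iff_add_eq]; exact_mod_cast hcomp
  have hcard : ((Finset.univ : Finset (Fin m → Fin r → Fin n)).card : ℝ) = ((n : ℝ) ^ r) ^ m := by
    simp
  rw [hcard]
  push_cast
  rw [← div_pow]
  calc (((Finset.univ.filter (fun e : Fin r → Fin n => ¬ ∀ a, e a ∈ S)).card : ℝ) / n ^ r) ^ m
      ≤ (rexp (-((S.card : ℝ) / n) ^ r)) ^ m := by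
        gcongr
        rw [hcomp', sub_div, div_self (by positivity), ← div_pow]
        have := Real.add_one_le_exp (-((S.card : ℝ) / n) ^ r)
        linarith
    _ = _ := by rw [← Real.exp_nat_mul]; ring_nf

lemma indep_prob_tendsto {r : ℕ} (hr : 3 ≤ r) (y c : ℝ) (hy : 0 < y) (hc : 0 ≤ c)
    (hyc : 1 - log y < c * y ^ (r - 1)) (m : ℕ → ℕ) (hm : ∀ᶠ n : ℕ in atTop, c * n ≤ (m n : ℝ)) :
    Tendsto (fun n : ℕ => uniformProb (Finset.univ : Finset (Fin (m n) → Fin r → Fin n))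
        (fun ω => ∃ S : Finset (Fin n), S.card = ⌈y * n⌉₊ ∧ ∀ i, ¬ ∀ a, ω i a ∈ S))
      atTop (nhds 0) := by
  set κ := c * y ^ (r - 1) - (1 - log y) with hκ
  have hκ0 : 0 < κ := by linarith
  refine squeeze_zero' (Eventually.of_forall fun n => uniformProb_nonneg _ _) ?_
    (tendsto_exp_neg_mul_nat (κ * y) (by positivity))
  filter_upwards [hm, eventually_gt_atTop 0] with n hmn hn0
  have hn' : (0 : ℝ) < n := by exact_mod_cast hn0
  set s := ⌈y * n⌉₊ with hs
  have hsy : y * n ≤ s := Nat.le_ceil _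
  have hs0 : (0 : ℝ) < s := lt_of_lt_of_le (by positivity) hsy
  have hf : (0 : ℝ) < s.factorial := by exact_mod_cast s.factorial_pos
  have h1 : (n.choose s : ℝ) ≤ rexp (s * (1 - log y)) := by
    calc (n.choose s : ℝ) ≤ (n : ℝ) ^ s / s.factorial := Nat.choose_le_pow_div s n
      _ = ((n : ℝ) / s) ^ s * ((s : ℝ) ^ s / s.factorial) := by
          rw [div_pow]; field_simp
      _ ≤ (1 / y) ^ s * rexp s := by
          refine mul_le_mul (pow_le_pow_left₀ (by positivity) ?_ _)
            (Real.pow_div_factorial_le_exp _ (by positivity) _) (by positivity) (by positivity)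
          rw [div_le_div_iff₀ hs0 hy]; linarith
      _ = _ := by
          rw [mul_sub, sub_eq_add_neg, Real.exp_add, mul_one, mul_comm, ← mul_neg,
            Real.exp_nat_mul, ← Real.log_inv, Real.exp_log (by positivity), one_div]
  have h2 : s * (c * y ^ (r - 1)) ≤ ((s : ℝ) / n) ^ r * (m n) := by
    obtain ⟨q, rfl⟩ : ∃ q, r = q + 1 := ⟨r - 1, by omega⟩
    rw [Nat.add_sub_cancel]
    calc s * (c * y ^ q) = (y ^ q * (s / n)) * (c * n) := by field_simp
      _ ≤ (((s : ℝ) / n) ^ q * (s / n)) * (m n) := by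
          gcongr
          rw [le_div_iff₀ hn']; exact hsy
      _ = _ := by rw [pow_succ]
  calc _ ≤ uniformProb (Finset.univ : Finset (Fin (m n) → Fin r → Fin n))
          (fun ω => ∃ S ∈ Finset.powersetCard s (Finset.univ : Finset (Fin n)),
            ∀ i, ¬ ∀ a, ω i a ∈ S) := by
        refine uniformProb_mono _ fun ω _ => ?_
        rintro ⟨S, hS, h⟩
        exact ⟨S, Finset.mem_powersetCard.2 ⟨Finset.subset_univ _, hS⟩, h⟩
    _ ≤ ∑ S ∈ Finset.powersetCard s (Finset.univ : Finset (Fin n)),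
          rexp (-(((s : ℝ) / n) ^ r * (m n))) := by
        refine (uniformProb_exists_le _ _ _).trans (Finset.sum_le_sum fun S hS => ?_)
        rw [← (Finset.mem_powersetCard.1 hS).2]
        exact prob_indep_le hn0 S
    _ = n.choose s * rexp (-(((s : ℝ) / n) ^ r * (m n))) := by simp
    _ ≤ rexp (s * (1 - log y)) * rexp (-(s * (c * y ^ (r - 1)))) := by gcongr
    _ = rexp (-κ * s) := by rw [← Real.exp_add, hκ]; ring_nf
    _ ≤ rexp (-(κ * y) * n) := by
        rw [Real.exp_le_exp]
        nlinarith

/-! ### From tuples to hypergraphs with a prescribed number of edges -/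

/-- The hypergraph whose edges are the ranges of the tuples of `ω`. -/
noncomputable def edgeSet {m r n : ℕ} (ω : Fin m → Fin r → Fin n) : Finset (Finset (Fin n)) :=
  Finset.univ.image (fun i => Finset.univ.image (ω i))

lemma mem_uniformEdgeFamily {n r m : ℕ} {E : Finset (Finset (Fin n))} :
    E ∈ uniformEdgeFamily n r m ↔ (∀ e ∈ E, e.card = r) ∧ E.card = m := by
  rw [uniformEdgeFamily, Finset.mem_filter, Finset.mem_powerset, Finset.subset_iff]
  simp [edgeCandidates]

lemma card_uniformEdgeFamily (n r m : ℕ) :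
    (uniformEdgeFamily n r m).card = (n.choose r).choose m := by
  have h1 : edgeCandidates n r = Finset.powersetCard r Finset.univ := by
    ext e; simp [edgeCandidates, Finset.mem_powersetCard]
  have h2 : uniformEdgeFamily n r m = Finset.powersetCard m (edgeCandidates n r) := by
    ext E; rw [uniformEdgeFamily, Finset.mem_filter, Finset.mem_powerset, Finset.mem_powersetCard]
  rw [h2, Finset.card_powersetCard, h1, Finset.card_powersetCard]
  simp

/-- Every `r`-uniform hypergraph with `m` edges is represented by at least `m! (r!)^m` tuples: order
the edges, then order each edge. -/
lemma le_card_edgeSet_eq {n r m : ℕ} {E : Finset (Finset (Fin n))}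
    (hE : E ∈ uniformEdgeFamily n r m) :
    m.factorial * r.factorial ^ m ≤
      (Finset.univ.filter (fun ω : Fin m → Fin r → Fin n => edgeSet ω = E)).card := by
  obtain ⟨hEr, hEm⟩ := mem_uniformEdgeFamily.1 hE
  let b : Fin m ≃ E := (Finset.equivFinOfCardEq hEm).symm
  let f : ∀ e : E, Fin r ≃ e.1 := fun e => (Finset.equivFinOfCardEq (hEr e.1 e.2)).symm
  let F : Equiv.Perm (Fin m) × (Fin m → Equiv.Perm (Fin r)) → (Fin m → Fin r → Fin n) :=
    fun p i a => (f (b (p.1 i)) (p.2 i a) : Fin n)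
  have himg : ∀ p i, Finset.univ.image (F p i) = (b (p.1 i)).1 := by
    intro p i
    ext v
    rw [Finset.mem_image]
    constructor
    · rintro ⟨a, -, rfl⟩
      exact (f (b (p.1 i)) (p.2 i a)).2
    · intro hv
      refine ⟨(p.2 i).symm ((f (b (p.1 i))).symm ⟨v, hv⟩), Finset.mem_univ _, ?_⟩
      simp [F]
  have hinj : Function.Injective F := by
    rintro ⟨τ, ρ⟩ ⟨τ', ρ'⟩ h
    have hτ : τ = τ' := by
      ext1 i
      have h1 := himg (τ, ρ) i
      rw [h, himg] at h1
      exact (b.injective (Subtype.ext h1)).symm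
    subst hτ
    congr 1
    funext i
    ext1 a
    have h2 : (f (b (τ i)) (ρ i a) : Fin n) = f (b (τ i)) (ρ' i a) := congrFun (congrFun h i) a
    exact (f (b (τ i))).injective (Subtype.ext h2)
  have hcard : (Finset.univ.image F).card = m.factorial * r.factorial ^ m := by
    rw [Finset.card_image_of_injective _ hinj]
    simp [Fintype.card_perm]
  rw [← hcard]
  refine Finset.card_le_card fun ω hω => ?_
  obtain ⟨p, -, rfl⟩ := Finset.mem_image.1 hω
  refine Finset.mem_filter.2 ⟨Finset.mem_univ _, ?_⟩
  ext e
  rw [edgeSet, Finset.mem_image]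
  simp only [himg]
  constructor
  · rintro ⟨i, -, rfl⟩
    exact (b (p.1 i)).2
  · intro he
    refine ⟨p.1.symm (b.symm ⟨e, he⟩), Finset.mem_univ _, by simp⟩

lemma card_filter_mul_le {n r m : ℕ} (B : Finset (Finset (Fin n)) → Prop) :
    ((uniformEdgeFamily n r m).filter B).card * (m.factorial * r.factorial ^ m) ≤
      (Finset.univ.filter (fun ω : Fin m → Fin r → Fin n => B (edgeSet ω))).card := by
  calc _ ≤ ∑ E ∈ (uniformEdgeFamily n r m).filter B,
          (Finset.univ.filter (fun ω : Fin m → Fin r → Fin n => edgeSet ω = E)).card := by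
        rw [← smul_eq_mul]
        exact Finset.card_nsmul_le_sum _ _ _ fun E hE =>
          le_card_edgeSet_eq (Finset.mem_filter.1 hE).1
    _ = (((uniformEdgeFamily n r m).filter B).biUnion fun E =>
          Finset.univ.filter (fun ω : Fin m → Fin r → Fin n => edgeSet ω = E)).card := by
        rw [Finset.card_biUnion]
        intro E _ E' _ hne
        rw [Function.onFun, Finset.disjoint_left]
        intro ω h h'
        exact hne ((Finset.mem_filter.1 h).2.symm.trans (Finset.mem_filter.1 h').2)
    _ ≤ _ := by
        refine Finset.card_le_card fun ω hω => ?_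
        obtain ⟨E, hE, h⟩ := Finset.mem_biUnion.1 hω
        refine Finset.mem_filter.2 ⟨Finset.mem_univ _, ?_⟩
        rw [(Finset.mem_filter.1 h).2]
        exact (Finset.mem_filter.1 hE).2

/-- A constant proportion of all tuple systems represent a hypergraph with exactly `m` edges. -/
lemma family_card_ge {n r m : ℕ} (hr : 3 ≤ r) (c : ℝ) (hc : 0 ≤ c) (hm : (m : ℝ) ≤ c * n)
    (hrn : r ≤ n) (hn : 2 * ((r : ℝ) ^ 2 + r.factorial * c) ≤ n) :
    rexp (-(2 * ((r : ℝ) ^ 2 + r.factorial * c) * c)) * ((n : ℝ) ^ r) ^ m ≤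
      (uniformEdgeFamily n r m).card * (m.factorial * (r.factorial : ℝ) ^ m) := by
  set K := (r : ℝ) ^ 2 + r.factorial * c with hK
  have hK0 : 0 < K := by positivity
  have hn' : (0 : ℝ) < n := by linarith
  have hn1 : (1 : ℝ) ≤ n := by exact_mod_cast (by omega : 1 ≤ n)
  have hKn : K / n ≤ 1 / 2 := by rw [div_le_iff₀ hn']; linarith
  -- `r! * choose n r` counts the injective tuples; Bernoulli bounds it below
  have h1 : (n : ℝ) ^ r * (1 - (r : ℝ) ^ 2 / n) ≤ r.factorial * (n.choose r : ℝ) := by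
    have h2 : ((n + 1 - r : ℕ) : ℝ) ^ r ≤ r.factorial * (n.choose r : ℝ) := by
      have := Nat.pow_sub_le_descFactorial n r
      rw [Nat.descFactorial_eq_factorial_mul_choose] at this
      exact_mod_cast this
    refine le_trans ?_ h2
    have h3 : ((n + 1 - r : ℕ) : ℝ) = n * (1 + -((r - 1) / n)) := by
      rw [Nat.cast_sub (by omega)]; push_cast; field_simp; ring
    have hr' : (3 : ℝ) ≤ r := by exact_mod_cast hr
    have hrn' : (r : ℝ) ≤ n := by exact_mod_cast hrn
    have h4 := one_add_mul_le_pow (a := -(((r : ℝ) - 1) / n)) (by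
      have : ((r : ℝ) - 1) / n ≤ 1 := by rw [div_le_one hn']; linarith
      linarith) r
    rw [h3, mul_pow]
    gcongr
    refine le_trans ?_ h4
    have h5 : (r : ℝ) * ((r - 1) / n) ≤ r ^ 2 / n := by
      rw [← mul_div_assoc]; gcongr; nlinarith
    linarith
  have h2 : (n : ℝ) ^ r * (1 - K / n) ≤ r.factorial * ((n.choose r : ℝ) - m) := by
    have h3 : (r.factorial : ℝ) * m ≤ n ^ r * (r.factorial * c / n) := by
      obtain ⟨q, rfl⟩ : ∃ q, r = q + 2 := ⟨r - 2, by omega⟩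
      have : (1 : ℝ) ≤ n ^ q := one_le_pow₀ hn1
      calc ((q + 2).factorial : ℝ) * m ≤ (q + 2).factorial * (c * n) := by gcongr
        _ = 1 * ((q + 2).factorial * c * n) := by ring
        _ ≤ n ^ q * ((q + 2).factorial * c * n) := by gcongr
        _ = _ := by field_simp; ring
    have h4 : (n : ℝ) ^ r * (1 - K / n) =
        n ^ r * (1 - (r : ℝ) ^ 2 / n) - n ^ r * (r.factorial * c / n) := by
      rw [hK]; ring
    rw [h4]; linarith
  have h3 : rexp (-(2 * (K / n))) ≤ 1 - K / n := by
    have h4 := Real.add_one_le_exp (2 * (K / n))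
    have h5 : 0 ≤ K / n := by positivity
    rw [Real.exp_neg, inv_le_iff_one_le_mul₀ (Real.exp_pos _)]
    calc (1 : ℝ) ≤ (2 * (K / n) + 1) * (1 - K / n) := by nlinarith
      _ ≤ rexp (2 * (K / n)) * (1 - K / n) := by
          have : 0 ≤ 1 - K / n := by linarith
          gcongr
      _ = _ := by ring
  have hpos : 0 < (n : ℝ) ^ r * (1 - K / n) :=
    mul_pos (by positivity) (lt_of_lt_of_le (Real.exp_pos _) h3)
  have hmN : m ≤ n.choose r := by
    have h4 : 0 < (r.factorial : ℝ) * ((n.choose r : ℝ) - m) := lt_of_lt_of_le hpos h2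
    have h5 := pos_of_mul_pos_right h4 (by positivity)
    have : (m : ℝ) ≤ n.choose r := by linarith
    exact_mod_cast this
  have h4 : ((n.choose r : ℝ) - m) ^ m ≤ (n.choose r).choose m * m.factorial := by
    have h5 := Nat.pow_sub_le_descFactorial (n.choose r) m
    rw [Nat.descFactorial_eq_factorial_mul_choose] at h5
    have h6 : ((n.choose r + 1 - m : ℕ) : ℝ) ^ m ≤ m.factorial * ((n.choose r).choose m : ℝ) := by
      exact_mod_cast h5
    rw [mul_comm]
    refine le_trans ?_ h6
    refine pow_le_pow_left₀ ?_ ?_ _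
    · have : (m : ℝ) ≤ n.choose r := by exact_mod_cast hmN
      linarith
    · rw [Nat.cast_sub (by omega)]; push_cast; linarith
  rw [card_uniformEdgeFamily]
  calc rexp (-(2 * K * c)) * ((n : ℝ) ^ r) ^ m ≤ (rexp (-(2 * (K / n)))) ^ m * ((n : ℝ) ^ r) ^ m := by
        gcongr
        rw [← Real.exp_nat_mul, Real.exp_le_exp]
        have : (m : ℝ) * (2 * (K / n)) ≤ c * n * (2 * (K / n)) := by gcongr
        have h7 : c * n * (2 * (K / n)) = 2 * K * c := by field_simp
        linarith
    _ = (n ^ r * rexp (-(2 * (K / n)))) ^ m := by rw [mul_pow]; ring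
    _ ≤ (n ^ r * (1 - K / n)) ^ m := by gcongr
    _ ≤ (r.factorial * ((n.choose r : ℝ) - m)) ^ m := by gcongr
    _ = (r.factorial : ℝ) ^ m * ((n.choose r : ℝ) - m) ^ m := by rw [mul_pow]
    _ ≤ (r.factorial : ℝ) ^ m * ((n.choose r).choose m * m.factorial) := by gcongr
    _ = _ := by ring

lemma uniformEdgeFamily_card_pos {n r m : ℕ} (hr : 3 ≤ r) (c : ℝ) (hc : 0 ≤ c)
    (hm : (m : ℝ) ≤ c * n) (hrn : r ≤ n) (hn : 2 * ((r : ℝ) ^ 2 + r.factorial * c) ≤ n) :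
    (0 : ℝ) < (uniformEdgeFamily n r m).card := by
  have h := family_card_ge hr c hc hm hrn hn
  have hn' : (0 : ℝ) < n := by exact_mod_cast (by omega : 0 < n)
  exact pos_of_mul_pos_left (lt_of_lt_of_le (by positivity) h) (by positivity)

lemma uniformProb_family_le {n r m : ℕ} (hr : 3 ≤ r) (c : ℝ) (hc : 0 ≤ c) (hm : (m : ℝ) ≤ c * n)
    (hrn : r ≤ n) (hn : 2 * ((r : ℝ) ^ 2 + r.factorial * c) ≤ n)
    (B : Finset (Finset (Fin n)) → Prop) :
    uniformProb (uniformEdgeFamily n r m) B ≤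
      rexp (2 * ((r : ℝ) ^ 2 + r.factorial * c) * c) *
        uniformProb (Finset.univ : Finset (Fin m → Fin r → Fin n)) (fun ω => B (edgeSet ω)) := by
  have h1 := family_card_ge hr c hc hm hrn hn
  have h0 := uniformEdgeFamily_card_pos hr c hc hm hrn hn
  have h2 : (((uniformEdgeFamily n r m).filter B).card : ℝ) *
      (m.factorial * (r.factorial : ℝ) ^ m) ≤
      (Finset.univ.filter (fun ω : Fin m → Fin r → Fin n => B (edgeSet ω))).card := by
    exact_mod_cast card_filter_mul_le B
  set M := 2 * ((r : ℝ) ^ 2 + r.factorial * c) * c with hM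
  have hn' : (0 : ℝ) < n := by exact_mod_cast (by omega : 0 < n)
  have hcard : ((Finset.univ : Finset (Fin m → Fin r → Fin n)).card : ℝ) = ((n : ℝ) ^ r) ^ m := by
    simp
  rw [uniformProb_eq, uniformProb_eq, hcard, ← mul_div_assoc, div_le_div_iff₀ h0 (by positivity)]
  rw [Real.exp_neg, inv_mul_le_iff₀ (Real.exp_pos _)] at h1
  calc _ ≤ (((uniformEdgeFamily n r m).filter B).card : ℝ) *
          (rexp M * ((uniformEdgeFamily n r m).card * (m.factorial * (r.factorial : ℝ) ^ m))) := by
        gcongr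
    _ = rexp M * ((((uniformEdgeFamily n r m).filter B).card : ℝ) *
          (m.factorial * (r.factorial : ℝ) ^ m)) * (uniformEdgeFamily n r m).card := by ring
    _ ≤ _ := by gcongr

/-! ### Chromatic and independence numbers -/

lemma properColoring_edgeSet {m r n q : ℕ} (hr : 0 < r) (ω : Fin m → Fin r → Fin n)
    (c : Fin n → Fin q) (hc : ∀ i, ¬ MonoT c (ω i)) : ProperColoring (edgeSet ω) c := by
  intro e he
  obtain ⟨i, -, rfl⟩ := Finset.mem_image.1 he
  have h := hc i
  rw [MonoT] at h
  push Not at h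
  obtain ⟨a, ha⟩ := h (c (ω i ⟨0, hr⟩))
  exact ⟨_, Finset.mem_image_of_mem _ (Finset.mem_univ a), _,
    Finset.mem_image_of_mem _ (Finset.mem_univ ⟨0, hr⟩), ha⟩

lemma bddAbove_indep {n : ℕ} (E : Finset (Finset (Fin n))) :
    BddAbove {s : ℕ | ∃ S : Finset (Fin n), S.card = s ∧ IndepSet E S} := by
  refine ⟨n, ?_⟩
  rintro s ⟨S, rfl, -⟩
  simpa using Finset.card_le_univ S

lemma independenceNumber_edgeSet_lt {m r n s : ℕ} (hr : 0 < r) (ω : Fin m → Fin r → Fin n)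
    (h : ¬ ∃ S : Finset (Fin n), S.card = s ∧ ∀ i, ¬ ∀ a, ω i a ∈ S) :
    independenceNumber (edgeSet ω) < s := by
  by_contra! hcon
  have hmem := Nat.sSup_mem (s := {s : ℕ | ∃ S : Finset (Fin n), S.card = s ∧
    IndepSet (edgeSet ω) S}) ⟨0, ∅, rfl, by
      intro e he hsub
      obtain ⟨i, -, rfl⟩ := Finset.mem_image.1 he
      have := hsub (Finset.mem_image_of_mem (ω i) (Finset.mem_univ ⟨0, hr⟩))
      simp at this⟩ (bddAbove_indep _)
  obtain ⟨S, hS, hind⟩ := hmem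
  change S.card = independenceNumber (edgeSet ω) at hS
  obtain ⟨T, hTS, hT⟩ := Finset.exists_subset_card_eq (hS ▸ hcon : s ≤ S.card)
  refine h ⟨T, hT, fun i hi => ?_⟩
  refine hind _ (Finset.mem_image_of_mem _ (Finset.mem_univ i)) ?_
  intro v hv
  obtain ⟨a, -, rfl⟩ := Finset.mem_image.1 hv
  exact hTS (hi a)

lemma exists_card_eq_cls {n : ℕ} {K : Type*} (σ : Fin n → K) (j : K) :
    ∃ S : Finset (Fin n), S.card = cls σ j ∧ ∀ v, v ∈ S ↔ σ v = j :=
  ⟨Finset.univ.filter (fun v => σ v = j), rfl, fun v => by rw [Finset.mem_filter]; simp⟩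

/-- Colour classes are independent sets. -/
lemma le_chromatic_mul_independence {n q : ℕ} (E : Finset (Finset (Fin n))) (c₀ : Fin n → Fin q)
    (h₀ : ProperColoring E c₀) : n ≤ chromaticNumber E * independenceNumber E := by
  obtain ⟨c, hc⟩ := Nat.sInf_mem (s := {k : ℕ | ∃ c : Fin n → Fin k, ProperColoring E c})
    ⟨q, c₀, h₀⟩
  change Fin n → Fin (chromaticNumber E) at c
  have hcls : ∀ j, cls c j ≤ independenceNumber E := by
    intro j
    obtain ⟨S, hS, hmem⟩ := exists_card_eq_cls c j
    refine le_csSup (bddAbove_indep E) ⟨S, hS, ?_⟩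
    intro e he hsub
    obtain ⟨v, hv, w, hw, hvw⟩ := hc e he
    exact hvw (((hmem v).1 (hsub hv)).trans ((hmem w).1 (hsub hw)).symm)
  calc n = ∑ j, cls c j := (sum_cls c).symm
    _ ≤ ∑ _j : Fin (chromaticNumber E), independenceNumber E := Finset.sum_le_sum fun j _ => hcls j
    _ = _ := by simp

lemma uniformProb_add_not {α : Type*} (F : Finset α) (P : α → Prop) (hF : (0 : ℝ) < F.card) :
    uniformProb F P + uniformProb F (fun x => ¬ P x) = 1 := by
  rw [uniformProb_eq, uniformProb_eq, ← add_div, div_eq_one_iff_eq hF.ne']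
  exact_mod_cast Finset.card_filter_add_card_filter_not P

lemma uniformProb_le_one {α : Type*} (F : Finset α) (P : α → Prop) : uniformProb F P ≤ 1 := by
  rw [uniformProb]
  exact div_le_one_of_le₀ (by exact_mod_cast Finset.card_filter_le _ _) (by positivity)

lemma good_prob_tendsto {r k : ℕ} (hr : 3 ≤ r) (e c β : ℝ) (hβ : 0 < β) (hc0 : 0 < c)
    (he2 : 2 ≤ e * log k) (hk4 : 4 ≤ log k)
    (hk : 8 * (r : ℝ) ^ 2 * log k ≤ k) (ha1 : ((1 + β) / k) ^ (r - 1) < 1)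
    (hc : c * ((1 + β) / k) ^ (r - 1) / (1 - ((1 + β) / k) ^ (r - 1)) ^ 2 ≤ (1 - e) * log k)
    (y c₁ : ℝ) (hy : 0 < y) (hc₁ : 0 ≤ c₁) (hyc : 1 - log y < c₁ * y ^ (r - 1))
    (m : ℕ → ℕ) (hm : ∀ n, (m n : ℝ) ≤ c * n) (hm₁ : ∀ᶠ n : ℕ in atTop, c₁ * n ≤ (m n : ℝ)) :
    Tendsto (fun n : ℕ => uniformProb (uniformEdgeFamily n r (m n)) (fun E =>
      chromaticNumber E ≤ k + r ∧ independenceNumber E < ⌈y * n⌉₊ ∧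
        n ≤ chromaticNumber E * independenceNumber E)) atTop (nhds 1) := by
  set M := 2 * ((r : ℝ) ^ 2 + r.factorial * c) * c with hM
  have hlim := ((not_colorable_prob_tendsto hr e c β hβ hc0 he2 hk4 hk ha1 hc m hm).add
    (indep_prob_tendsto hr y c₁ hy hc₁ hyc m hm₁)).const_mul (rexp M)
  rw [add_zero, mul_zero] at hlim
  have hlow := (tendsto_const_nhds (x := (1 : ℝ))).sub hlim
  rw [sub_zero] at hlow
  refine tendsto_of_tendsto_of_tendsto_of_le_of_le' hlow tendsto_const_nhds ?_ ?_
  · have hlarge : ∀ᶠ n : ℕ in atTop, 2 * ((r : ℝ) ^ 2 + r.factorial * c) ≤ n :=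
      tendsto_natCast_atTop_atTop.eventually_ge_atTop _
    filter_upwards [eventually_ge_atTop r, hlarge] with n hrn hn
    have hpos := uniformEdgeFamily_card_pos hr c hc0.le (hm n) hrn hn
    set G : Finset (Finset (Fin n)) → Prop := fun E =>
      chromaticNumber E ≤ k + r ∧ independenceNumber E < ⌈y * n⌉₊ ∧
        n ≤ chromaticNumber E * independenceNumber E with hG
    have hsum : uniformProb (uniformEdgeFamily n r (m n)) G +
        uniformProb (uniformEdgeFamily n r (m n)) (fun E => ¬ G E) = 1 := uniformProb_add_not _ G hpos
    have hbad := uniformProb_family_le hr c hc0.le (hm n) hrn hn (fun E => ¬ G E)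
    have hbad2 : uniformProb (Finset.univ : Finset (Fin (m n) → Fin r → Fin n))
        (fun ω => ¬ G (edgeSet ω)) ≤
        uniformProb (Finset.univ : Finset (Fin (m n) → Fin r → Fin n))
          (fun ω => ¬ ∃ σ : Fin n → Fin (k + r), ∀ i, ¬ MonoT σ (ω i)) +
        uniformProb (Finset.univ : Finset (Fin (m n) → Fin r → Fin n))
          (fun ω => ∃ S : Finset (Fin n), S.card = ⌈y * n⌉₊ ∧ ∀ i, ¬ ∀ a, ω i a ∈ S) := by
      refine le_trans (uniformProb_mono _ fun ω _ hω => ?_) (uniformProb_or_le _ _ _)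
      by_contra hcon
      rw [not_or, not_not] at hcon
      obtain ⟨⟨σ, hσ⟩, h2⟩ := hcon
      have hσ' := properColoring_edgeSet (by omega) ω σ hσ
      exact hω ⟨Nat.sInf_le ⟨σ, hσ'⟩, independenceNumber_edgeSet_lt (by omega) ω h2,
        le_chromatic_mul_independence _ σ hσ'⟩
    have := hbad.trans (mul_le_mul_of_nonneg_left hbad2 (Real.exp_pos _).le)
    linarith
  · refine Eventually.of_forall fun n => ?_
    exact uniformProb_le_one _ _

/-! ### Asymptotics in the average degree -/

/-- The asymptotic value `((r-1)d/(r log d))^{1/(r-1)}` of the chromatic number. -/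
noncomputable def chiVal (r d : ℕ) : ℝ :=
  (((r : ℝ) - 1) * d / (r * Real.log d)) ^ ((1 : ℝ) / ((r : ℝ) - 1))

lemma tendsto_log_natCast : Tendsto (fun d : ℕ => log (d : ℝ)) atTop atTop :=
  Real.tendsto_log_atTop.comp tendsto_natCast_atTop_atTop

lemma rpow_one_div_pow {r : ℕ} (hr : 3 ≤ r) {x : ℝ} (hx : 0 ≤ x) :
    (x ^ ((1 : ℝ) / ((r : ℝ) - 1))) ^ (r - 1) = x := by
  have h : (1 : ℝ) / ((r : ℝ) - 1) = ((r - 1 : ℕ) : ℝ)⁻¹ := by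
    rw [Nat.cast_sub (by omega)]; simp
  rw [h]
  exact Real.rpow_inv_natCast_pow hx (by omega)

lemma log_chiVal {r d : ℕ} (hr : 3 ≤ r) (hd : 0 < d) (hL : 0 < log (d : ℝ)) :
    ((r : ℝ) - 1) * log (chiVal r d) = log d - log (log d) - log (r / ((r : ℝ) - 1)) := by
  have hr' : (3 : ℝ) ≤ r := by exact_mod_cast hr
  have hd' : (0 : ℝ) < d := by exact_mod_cast hd
  have hq : (0 : ℝ) < (r : ℝ) - 1 := by linarith
  have hr0 : (0 : ℝ) < r := by linarith
  rw [chiVal, Real.log_rpow (by positivity), Real.log_div (by positivity) (by positivity),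
    Real.log_mul (by positivity) (by positivity), Real.log_mul (by positivity) (by positivity),
    Real.log_div (by positivity) (by positivity)]
  field_simp
  ring

lemma eventually_log_chiVal {r : ℕ} (hr : 3 ≤ r) (θ : ℝ) (hθ : 0 < θ) :
    ∀ᶠ d : ℕ in atTop, (1 - θ) * log (d : ℝ) ≤ ((r : ℝ) - 1) * log (chiVal r d) ∧
      ((r : ℝ) - 1) * log (chiVal r d) ≤ log (d : ℝ) := by
  have hr' : (3 : ℝ) ≤ r := by exact_mod_cast hr
  have hlo := Real.isLittleO_log_id_atTop.bound (show 0 < θ / 2 by positivity)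
  filter_upwards [tendsto_log_natCast.eventually hlo, tendsto_log_natCast.eventually_ge_atTop 1,
    tendsto_log_natCast.eventually_ge_atTop (log (r / ((r : ℝ) - 1)) / (θ / 2)),
    eventually_gt_atTop 0] with d h1 h2 h3 h4
  have hL0 : 0 < log (d : ℝ) := by linarith
  rw [log_chiVal hr h4 hL0]
  have h5 : 0 ≤ log (log (d : ℝ)) := Real.log_nonneg h2
  have h6 : 0 ≤ log (r / ((r : ℝ) - 1)) := Real.log_nonneg (by
    rw [le_div_iff₀ (by linarith)]; linarith)
  simp only [id, Real.norm_eq_abs, abs_of_nonneg h5, abs_of_pos hL0] at h1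
  rw [div_le_iff₀ (by positivity)] at h3
  constructor <;> linarith

lemma chiVal_pos {r d : ℕ} (hr : 3 ≤ r) (hd : 0 < d) (hL : 0 < log (d : ℝ)) : 0 < chiVal r d := by
  have hr' : (3 : ℝ) ≤ r := by exact_mod_cast hr
  have hd' : (0 : ℝ) < d := by exact_mod_cast hd
  have hq : (0 : ℝ) < (r : ℝ) - 1 := by linarith
  rw [chiVal]
  positivity

lemma tendsto_log_chiVal {r : ℕ} (hr : 3 ≤ r) :
    Tendsto (fun d : ℕ => log (chiVal r d)) atTop atTop := by
  have hr' : (3 : ℝ) ≤ r := by exact_mod_cast hr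
  have hq : (0 : ℝ) < (r : ℝ) - 1 := by linarith
  refine tendsto_atTop_mono' atTop ?_
    (tendsto_log_natCast.const_mul_atTop (show 0 < 1 / 2 / ((r : ℝ) - 1) by positivity))
  filter_upwards [eventually_log_chiVal hr (1 / 2) (by norm_num)] with d hd
  rw [div_mul_eq_mul_div, div_le_iff₀ hq]
  linarith [hd.1]

lemma tendsto_chiVal {r : ℕ} (hr : 3 ≤ r) : Tendsto (fun d : ℕ => chiVal r d) atTop atTop := by
  refine (Real.tendsto_exp_atTop.comp (tendsto_log_chiVal hr)).congr' ?_
  filter_upwards [eventually_gt_atTop 0, tendsto_log_natCast.eventually_gt_atTop 0] with d h1 h2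
  exact Real.exp_log (chiVal_pos hr h1 h2)

lemma eventually_sqrt_mul_log (η : ℝ) (hη : 0 < η) :
    ∀ᶠ d : ℕ in atTop, (d : ℝ) ^ ((1 : ℝ) / 2) * log d ≤ η * d := by
  have h := (isLittleO_log_rpow_atTop (show (0 : ℝ) < 1 / 2 by norm_num)).bound hη
  filter_upwards [tendsto_natCast_atTop_atTop.eventually h, eventually_gt_atTop 0] with d h1 h2
  have hd : (0 : ℝ) < d := by exact_mod_cast h2
  rw [Real.norm_eq_abs, Real.norm_eq_abs, abs_of_pos (by positivity : 0 < (d : ℝ) ^ ((1 : ℝ) / 2))]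
    at h1
  calc (d : ℝ) ^ ((1 : ℝ) / 2) * log d ≤ (d : ℝ) ^ ((1 : ℝ) / 2) * (η * d ^ ((1 : ℝ) / 2)) := by
        gcongr; exact (le_abs_self _).trans h1
    _ = η * (d ^ ((1 : ℝ) / 2) * d ^ ((1 : ℝ) / 2)) := by ring
    _ = η * d := by rw [← Real.rpow_add hd]; norm_num

lemma mFun_le {r d : ℕ} (n : ℕ) : (mFun r d n : ℝ) ≤ d / r * n := by
  have h : mFun r d n ≤ ⌊(d : ℝ) / r * n⌋₊ := by
    refine Nat.floor_le_floor ?_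
    have : 0 ≤ (d : ℝ) ^ ((1 : ℝ) / 2) * log d := mul_nonneg (by positivity) (Real.log_natCast_nonneg d)
    rw [div_mul_eq_mul_div]
    gcongr
    linarith
  calc (mFun r d n : ℝ) ≤ (⌊(d : ℝ) / r * n⌋₊ : ℕ) := by exact_mod_cast h
    _ ≤ _ := Nat.floor_le (by positivity)

lemma eventually_le_mFun_sub_log {r d : ℕ} (hr : 0 < r) (hd0 : 0 < d) (η : ℝ) (hη : 0 < η)
    (hd : (d : ℝ) ^ ((1 : ℝ) / 2) * log d ≤ η / 2 * d) :
    ∀ᶠ n : ℕ in atTop, (1 - η) * d / r * n ≤ (mFun r d n : ℝ) - log n := by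
  have hr' : (0 : ℝ) < r := by exact_mod_cast hr
  have hd' : (0 : ℝ) < d := by exact_mod_cast hd0
  have h := Real.isLittleO_log_id_atTop.bound (show 0 < η / 4 * d / r by positivity)
  filter_upwards [tendsto_natCast_atTop_atTop.eventually h,
    tendsto_natCast_atTop_atTop.eventually_ge_atTop (1 / (η / 4 * d / r))] with n h1 h2
  rw [div_le_iff₀ (by positivity)] at h2
  simp only [id, Real.norm_eq_abs, Nat.abs_cast] at h1
  have h3 := (le_abs_self _).trans h1
  have h4 := Nat.lt_floor_add_one (((d : ℝ) - (d : ℝ) ^ ((1 : ℝ) / 2) * Real.log d) * n / r)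
  change _ < (mFun r d n : ℝ) + 1 at h4
  have h5 : ((d : ℝ) - η / 2 * d) * n / r ≤
      ((d : ℝ) - (d : ℝ) ^ ((1 : ℝ) / 2) * Real.log d) * n / r := by
    gcongr
  have h6 : ((d : ℝ) - η / 2 * d) * n / r =
      (1 - η) * d / r * n + n * (η / 4 * d / r) + η / 4 * d / r * n := by
    field_simp; ring
  linarith

lemma cube_bound {η : ℝ} (hη : 0 < η) (hη1 : η ≤ 1 / 20) :
    1 - η / 2 ≤ (1 - η / 8) * (1 - η / 8) * (1 - η / 8) := by
  have h := one_add_mul_le_pow (a := -(η / 8)) (by linarith) 3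
  push_cast at h
  have h2 : (1 + -(η / 8)) ^ 3 = (1 - η / 8) * (1 - η / 8) * (1 - η / 8) := by ring
  linarith

set_option maxHeartbeats 800000 in
/-- The choice `k = ⌈(1 + η) X⌉` satisfies every hypothesis of the second moment argument. -/
lemma eventually_params_colour {r : ℕ} (hr : 3 ≤ r) (η : ℝ) (hη : 0 < η) (hη1 : η ≤ 1 / 20) :
    ∀ᶠ d : ℕ in atTop, ∃ k : ℕ, ((k + r : ℕ) : ℝ) ≤ (1 + 2 * η) * chiVal r d ∧
      2 ≤ η / 8 * log k ∧ 4 ≤ log k ∧ 8 * (r : ℝ) ^ 2 * log k ≤ k ∧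
      ((1 + (η / 2 - η ^ 2 / 2)) / k) ^ (r - 1) < 1 ∧
      (d : ℝ) / r * ((1 + (η / 2 - η ^ 2 / 2)) / k) ^ (r - 1) /
        (1 - ((1 + (η / 2 - η ^ 2 / 2)) / k) ^ (r - 1)) ^ 2 ≤ (1 - η / 8) * log k := by
  have hr' : (3 : ℝ) ≤ r := by exact_mod_cast hr
  have hq : (0 : ℝ) < (r : ℝ) - 1 := by linarith
  have hlo := Real.isLittleO_log_id_atTop.bound (show 0 < 1 / (8 * (r : ℝ) ^ 2) by positivity)
  obtain ⟨x₀, hx₀⟩ := eventually_atTop.1 hlo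
  filter_upwards [eventually_log_chiVal hr (η / 8) (by positivity), eventually_gt_atTop 0,
    tendsto_log_natCast.eventually_gt_atTop 0, (tendsto_chiVal hr).eventually_ge_atTop x₀,
    (tendsto_chiVal hr).eventually_ge_atTop ((r + 1) / η),
    (tendsto_chiVal hr).eventually_ge_atTop (16 / η),
    (tendsto_log_chiVal hr).eventually_ge_atTop (2 / (η / 8)),
    (tendsto_log_chiVal hr).eventually_ge_atTop 4] with d hlogX hd0 hL hXx hXr hXη hlog2 hlog4
  set X := chiVal r d with hX
  have hX0 : 0 < X := chiVal_pos hr hd0 hL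
  have hd' : (0 : ℝ) < d := by exact_mod_cast hd0
  have hX16 : 1 ≤ X := by
    refine le_trans ?_ hXη
    rw [le_div_iff₀ hη]; linarith
  rw [div_le_iff₀ hη] at hXr hXη
  rw [div_le_iff₀ (by positivity)] at hlog2
  have hXpow : X ^ (r - 1) = ((r : ℝ) - 1) * d / (r * log d) :=
    rpow_one_div_pow hr (by positivity)
  set k := ⌈(1 + η) * X⌉₊ with hk
  have hk1 : (1 + η) * X ≤ k := Nat.le_ceil _
  have hk2 : (k : ℝ) < (1 + η) * X + 1 := Nat.ceil_lt_add_one (by positivity)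
  have hkX : X ≤ k := by nlinarith
  have hk0 : (0 : ℝ) < k := by linarith
  have hlogk : log X ≤ log k := Real.log_le_log hX0 hkX
  set b := (1 + (η / 2 - η ^ 2 / 2)) / (k : ℝ) with hb
  have hnum : 1 + (η / 2 - η ^ 2 / 2) = (1 + η) * (1 - η / 2) := by ring
  have hb0 : 0 ≤ b := by rw [hb, hnum]; apply div_nonneg <;> nlinarith
  have hbX : b ≤ (1 - η / 2) / X := by
    rw [hb, hnum, div_le_div_iff₀ hk0 hX0]
    nlinarith
  set a := b ^ (r - 1) with ha
  have haX : a ≤ (1 - η / 2) / X ^ (r - 1) := by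
    calc a ≤ ((1 - η / 2) / X) ^ (r - 1) := pow_le_pow_left₀ hb0 hbX _
      _ = (1 - η / 2) ^ (r - 1) / X ^ (r - 1) := div_pow _ _ _
      _ ≤ _ := by
          gcongr
          exact pow_le_of_le_one (by linarith) (by linarith) (by omega)
  have ha0 : 0 ≤ a := by positivity
  have haη : a ≤ η / 16 := by
    calc a ≤ (1 - η / 2) / X ^ (r - 1) := haX
      _ ≤ 1 / X := by
          gcongr
          · linarith
          · exact le_self_pow₀ hX16 (by omega)
      _ ≤ η / 16 := by rw [div_le_div_iff₀ hX0 (by norm_num)]; linarith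
  refine ⟨k, ?_, ?_, by linarith, ?_, by linarith, ?_⟩
  · push_cast; nlinarith
  · nlinarith
  · have h := hx₀ k (hXx.trans hkX)
    simp only [id, Real.norm_eq_abs, Nat.abs_cast] at h
    have h2 := (le_abs_self _).trans h
    rw [one_div, inv_mul_eq_div, le_div_iff₀ (by positivity)] at h2
    linarith
  · have h1 : (d : ℝ) / r * a ≤ (1 - η / 2) * (log d / ((r : ℝ) - 1)) := by
      calc (d : ℝ) / r * a ≤ d / r * ((1 - η / 2) / X ^ (r - 1)) := by gcongr
        _ = _ := by rw [hXpow]; field_simp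
    have h2 : (1 - η / 8) * (log d / ((r : ℝ) - 1)) ≤ log k := by
      refine le_trans ?_ hlogk
      rw [← mul_div_assoc, div_le_iff₀ hq]
      linarith [hlogX.1]
    have h3 : 1 - η / 8 ≤ (1 - a) ^ 2 := by nlinarith
    have hM : 0 < log d / ((r : ℝ) - 1) := by positivity
    have hpos : 0 < (1 - a) ^ 2 := by linarith
    rw [div_le_iff₀ hpos]
    calc (d : ℝ) / r * a ≤ (1 - η / 2) * (log d / ((r : ℝ) - 1)) := h1
      _ ≤ (1 - η / 8) * ((1 - η / 8) * (log d / ((r : ℝ) - 1))) * (1 - η / 8) := by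
          have : 1 - η / 2 ≤ (1 - η / 8) * (1 - η / 8) * (1 - η / 8) := cube_bound hη hη1
          calc _ ≤ (1 - η / 8) * (1 - η / 8) * (1 - η / 8) * (log d / ((r : ℝ) - 1)) := by gcongr
            _ = _ := by ring
      _ ≤ (1 - η / 8) * log k * (1 - a) ^ 2 := by
          have h4 : 0 ≤ 1 - η / 8 := by linarith
          have h5 : 0 ≤ log (k : ℝ) := by linarith
          gcongr

lemma eventually_params_indep {r : ℕ} (hr : 3 ≤ r) (η : ℝ) (hη : 0 < η) (hη1 : η ≤ 1 / 20) :
    ∀ᶠ d : ℕ in atTop, 1 - log ((1 + 3 * η) / chiVal r d) <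
      (1 - η) * d / r * ((1 + 3 * η) / chiVal r d) ^ (r - 1) := by
  have hr' : (3 : ℝ) ≤ r := by exact_mod_cast hr
  have hq : (0 : ℝ) < (r : ℝ) - 1 := by linarith
  filter_upwards [eventually_log_chiVal hr 1 (by norm_num), eventually_gt_atTop 0,
    tendsto_log_natCast.eventually_gt_atTop 0,
    tendsto_log_natCast.eventually_gt_atTop (((r : ℝ) - 1) / η)] with d hlogX hd0 hL hLη
  set X := chiVal r d with hX
  have hX0 : 0 < X := chiVal_pos hr hd0 hL
  have hd' : (0 : ℝ) < d := by exact_mod_cast hd0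
  have hXpow : X ^ (r - 1) = ((r : ℝ) - 1) * d / (r * log d) :=
    rpow_one_div_pow hr (by positivity)
  rw [div_lt_iff₀ hη] at hLη
  have h1 : (1 - η) * d / r * ((1 + 3 * η) / X) ^ (r - 1) =
      (1 - η) * (1 + 3 * η) ^ (r - 1) * (log d / ((r : ℝ) - 1)) := by
    rw [div_pow, hXpow]; field_simp
  have h2 : 1 + 3 * η ≤ (1 + 3 * η) ^ (r - 1) := le_self_pow₀ (by linarith) (by omega)
  have hM : 0 < log d / ((r : ℝ) - 1) := by positivity
  have h3 : 1 < η * (log d / ((r : ℝ) - 1)) := by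
    rw [← mul_div_assoc, lt_div_iff₀ hq]; linarith
  have h4 : log X ≤ log d / ((r : ℝ) - 1) := by
    rw [le_div_iff₀ hq]; linarith [hlogX.2]
  have h5 : 0 ≤ log (1 + 3 * η) := Real.log_nonneg (by linarith)
  rw [h1, Real.log_div (by positivity) hX0.ne']
  calc 1 - (log (1 + 3 * η) - log X) ≤ 1 + log d / ((r : ℝ) - 1) := by linarith
    _ < (1 + η) * (log d / ((r : ℝ) - 1)) := by linarith
    _ ≤ (1 - η) * (1 + 3 * η) * (log d / ((r : ℝ) - 1)) := by gcongr; nlinarith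
    _ ≤ _ := by
        have : 0 ≤ 1 - η := by linarith
        gcongr

/-- `X Y` is close to `1`, for `X` and `Y` the asymptotic values of the chromatic number and of the
independence ratio; `D` is the actual average degree. -/
lemma chiVal_mul_bounds {r d : ℕ} (hr : 3 ≤ r) (hd0 : 0 < d) (hL : 0 < log (d : ℝ)) (η D : ℝ)
    (hη : 0 < η) (hη1 : η ≤ 1 / 20) (hLη : -log (1 - η) ≤ η * log d)
    (hD1 : (1 - η) * d ≤ D) (hD2 : D ≤ d) :
    (1 - η) ≤ chiVal r d *
        ((r * Real.log D / (((r : ℝ) - 1) * D)) ^ ((1 : ℝ) / ((r : ℝ) - 1))) ∧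
      (1 - η) * (chiVal r d *
        ((r * Real.log D / (((r : ℝ) - 1) * D)) ^ ((1 : ℝ) / ((r : ℝ) - 1)))) ≤ 1 := by
  have hr' : (3 : ℝ) ≤ r := by exact_mod_cast hr
  have hq : (0 : ℝ) < (r : ℝ) - 1 := by linarith
  have hd' : (0 : ℝ) < d := by exact_mod_cast hd0
  have hη0 : 0 < 1 - η := by linarith
  have hD0 : 0 < D := lt_of_lt_of_le (by positivity) hD1
  have hlogD1 : (1 - η) * log d ≤ log D := by
    have h := Real.log_le_log (by positivity) hD1
    rw [Real.log_mul hη0.ne' hd'.ne'] at h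
    linarith
  have hlogD2 : log D ≤ log d := Real.log_le_log hD0 hD2
  have hlogD0 : 0 < log D := lt_of_lt_of_le (by positivity) hlogD1
  set Y := (r * Real.log D / (((r : ℝ) - 1) * D)) ^ ((1 : ℝ) / ((r : ℝ) - 1)) with hY
  set X := chiVal r d with hX
  have hX0 : 0 < X := chiVal_pos hr hd0 hL
  have hY0 : 0 < Y := by positivity
  have hXpow : X ^ (r - 1) = ((r : ℝ) - 1) * d / (r * log d) :=
    rpow_one_div_pow hr (by positivity)
  have hYpow : Y ^ (r - 1) = r * Real.log D / (((r : ℝ) - 1) * D) :=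
    rpow_one_div_pow hr (by positivity)
  have hXY : (X * Y) ^ (r - 1) = (d / D) * (log D / log d) := by
    rw [mul_pow, hXpow, hYpow]; field_simp
  have hdD : 1 ≤ d / D := by rw [le_div_iff₀ hD0]; linarith
  have hdD2 : (1 - η) * (d / D) ≤ 1 := by rw [← mul_div_assoc, div_le_one hD0]; exact hD1
  have hl1 : (1 - η) ≤ log D / log d := by rw [le_div_iff₀ hL]; exact hlogD1
  have hl2 : log D / log d ≤ 1 := by rw [div_le_one hL]; exact hlogD2
  have hl0 : 0 ≤ log D / log d := by linarith
  have hr1 : r - 1 ≠ 0 := by omega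
  constructor
  · by_contra! hcon
    have h1 : (X * Y) ^ (r - 1) ≤ X * Y := pow_le_of_le_one (by positivity) (by linarith) hr1
    rw [hXY] at h1
    nlinarith
  · by_contra! hcon
    have h0 : 1 ≤ X * Y := by
      have : 0 ≤ X * Y := by positivity
      nlinarith
    have h1 : X * Y ≤ (X * Y) ^ (r - 1) := le_self_pow₀ h0 hr1
    rw [hXY] at h1
    have h2 : (d / D) * (log D / log d) ≤ d / D := mul_le_of_le_one_right (by linarith) hl2
    nlinarith

/-- The final arithmetic: bounds on `χ` and `α` in terms of `X` give the relative errors. -/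
lemma relative_errors (χ α X Y n ε η : ℝ) (hη : 0 < η) (hη1 : η ≤ 1 / 20) (hηε : 16 * η ≤ ε)
    (hX : 0 < X) (hY : 0 < Y) (hn : 0 < n) (hχ0 : 0 ≤ χ) (hχ : χ ≤ (1 + 2 * η) * X)
    (hα0 : 0 ≤ α) (hα : α ≤ (1 + 3 * η) / X * n) (hχα : n ≤ χ * α)
    (hXY1 : 1 - η ≤ X * Y) (hXY2 : (1 - η) * (X * Y) ≤ 1) :
    |χ - X| ≤ ε / 2 * X ∧ |α - Y * n| ≤ ε / 2 * (Y * n) := by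
  rw [div_mul_eq_mul_div, le_div_iff₀ hX] at hα
  have hχ' : X ≤ χ * (1 + 3 * η) := by
    have h1 : n * X ≤ χ * ((1 + 3 * η) * n) := by nlinarith
    have h2 : n * X ≤ n * (χ * (1 + 3 * η)) := by linarith
    exact le_of_mul_le_mul_left h2 hn
  have hα' : n ≤ (1 + 2 * η) * X * α := hχα.trans (by gcongr)
  have hYn : 0 < Y * n := by positivity
  constructor
  · rw [abs_le]
    constructor
    · nlinarith
    · nlinarith
  · have h1 : α ≤ (1 + 8 * η) * (Y * n) := by
      have h2 : α * X ≤ (1 + 8 * η) * (Y * n) * X := by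
        calc α * X ≤ (1 + 3 * η) * n := hα
          _ ≤ (1 + 8 * η) * (1 - η) * n := by gcongr; nlinarith
          _ ≤ (1 + 8 * η) * (X * Y) * n := by gcongr
          _ = _ := by ring
      exact le_of_mul_le_mul_right h2 hX
    have h2 : (1 - 4 * η) * (Y * n) ≤ α := by
      have h3 : (1 - 4 * η) * (Y * n) * X ≤ α * X := by
        have h4 : (1 - η) * (X * Y) * n ≤ (1 + 2 * η) * (α * X) := by
          calc (1 - η) * (X * Y) * n ≤ 1 * n := by gcongr
            _ ≤ _ := by linarith
        have h5 : (1 - 4 * η) * (1 + 2 * η) * (X * Y * n) ≤ (1 - η) * (X * Y * n) := by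
          gcongr; nlinarith
        have h6 : (1 + 2 * η) * ((1 - 4 * η) * (Y * n) * X) ≤ (1 + 2 * η) * (α * X) := by
          linarith
        exact le_of_mul_le_mul_left h6 (by linarith)
      exact le_of_mul_le_mul_right h3 hX
    rw [abs_le]
    constructor <;> nlinarith

/-- For every `r ≥ 3` and `ε > 0` there is `d₀` such that for every fixed integer `d ≥ d₀`
and every sequence `m′(n)` of integers with `m(n) − log n ≤ m′(n) ≤ m(n)`, w.h.p.
the uniform random `r`-uniform hypergraph with exactly `m′(n)` edges satisfies both
`|χ − X| ≤ (ε/2)X` and `|α − Y·n| ≤ (ε/2)·Y·n`, where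
`X = ((r−1)d/(r log d))^(1/(r−1))` and `Y = (r log D/((r−1)D))^(1/(r−1))`, `D = r·m(n)/n`. -/
theorem chromatic_and_independence_of_uniform_edge_model
    (r : ℕ) (hr : 3 ≤ r) (ε : ℝ) (hε : 0 < ε) :
    ∃ d₀ : ℕ, ∀ d : ℕ, d₀ ≤ d →
      ∀ m' : ℕ → ℕ,
        (∀ n : ℕ, (mFun r d n : ℝ) - Real.log n ≤ m' n ∧ m' n ≤ mFun r d n) →
        Filter.Tendsto
          (fun n : ℕ =>
            uniformProb (uniformEdgeFamily n r (m' n))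
              (fun E =>
                |(chromaticNumber E : ℝ) -
                    ((((r : ℝ) - 1) * d / (r * Real.log d)) ^ ((1 : ℝ) / ((r : ℝ) - 1)))| ≤
                  ε / 2 * ((((r : ℝ) - 1) * d / (r * Real.log d)) ^ ((1 : ℝ) / ((r : ℝ) - 1))) ∧
                |(independenceNumber E : ℝ) -
                    ((r * Real.log (DFun r d n) / (((r : ℝ) - 1) * DFun r d n)) ^
                        ((1 : ℝ) / ((r : ℝ) - 1))) * n| ≤
                  ε / 2 * (((r * Real.log (DFun r d n) / (((r : ℝ) - 1) * DFun r d n)) ^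
                      ((1 : ℝ) / ((r : ℝ) - 1))) * n)))
          Filter.atTop (nhds 1) := by
  set η : ℝ := min (ε / 16) (1 / 20) with hηdef
  have hη : 0 < η := by positivity
  have hη1 : η ≤ 1 / 20 := min_le_right _ _
  have hηε : 16 * η ≤ ε := by
    have : η ≤ ε / 16 := min_le_left _ _
    linarith
  have hr' : (3 : ℝ) ≤ r := by exact_mod_cast hr
  have hr0 : (0 : ℝ) < r := by linarith
  have hev : ∀ᶠ d : ℕ in atTop, 0 < d ∧ 0 < log (d : ℝ) ∧ -log (1 - η) ≤ η * log d ∧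
      (d : ℝ) ^ ((1 : ℝ) / 2) * log d ≤ η / 2 * d := by
    filter_upwards [eventually_gt_atTop 0, tendsto_log_natCast.eventually_gt_atTop 0,
      tendsto_log_natCast.eventually_ge_atTop (-log (1 - η) / η),
      eventually_sqrt_mul_log (η / 2) (by positivity)] with d h1 h2 h3 h4
    rw [div_le_iff₀ hη] at h3
    exact ⟨h1, h2, by linarith, h4⟩
  obtain ⟨d₀, hd₀⟩ := eventually_atTop.1
    ((eventually_params_colour hr η hη hη1).and ((eventually_params_indep hr η hη hη1).and hev))
  refine ⟨d₀, fun d hd m' hm' => ?_⟩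
  obtain ⟨⟨k, hkX, he2, hk4, hk, ha1, hc⟩, hyc, hd0, hL, hLη, hsqrt⟩ := hd₀ d hd
  have hd' : (0 : ℝ) < d := by exact_mod_cast hd0
  have hX0 : 0 < chiVal r d := chiVal_pos hr hd0 hL
  have hmU : ∀ n, (m' n : ℝ) ≤ d / r * n := fun n =>
    le_trans (by exact_mod_cast (hm' n).2) (mFun_le n)
  have hmL : ∀ᶠ n : ℕ in atTop, (1 - η) * d / r * n ≤ (m' n : ℝ) :=
    (eventually_le_mFun_sub_log (by omega) hd0 η hη hsqrt).mono fun n hn => hn.trans (hm' n).1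
  have hβ : 0 < η / 2 - η ^ 2 / 2 := by nlinarith
  have hη0 : 0 ≤ 1 - η := by linarith
  have hgood := good_prob_tendsto hr (η / 8) (d / r) (η / 2 - η ^ 2 / 2) hβ (by positivity)
    he2 hk4 hk ha1 hc ((1 + 3 * η) / chiVal r d) ((1 - η) * d / r) (by positivity) (by positivity)
    hyc m' hmU hmL
  refine tendsto_of_tendsto_of_tendsto_of_le_of_le' hgood tendsto_const_nhds ?_
    (Eventually.of_forall fun n => uniformProb_le_one _ _)
  filter_upwards [hmL, eventually_gt_atTop 0] with n hmn hn0
  have hn' : (0 : ℝ) < n := by exact_mod_cast hn0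
  refine uniformProb_mono _ fun E _ => ?_
  rintro ⟨h1, h2, h3⟩
  have hmn' : (m' n : ℝ) ≤ mFun r d n := by exact_mod_cast (hm' n).2
  have hD1 : (1 - η) * d ≤ DFun r d n := by
    rw [DFun, le_div_iff₀ hn']
    calc (1 - η) * d * n = r * ((1 - η) * d / r * n) := by field_simp
      _ ≤ r * mFun r d n := by gcongr; linarith
  have hD2 : DFun r d n ≤ d := by
    rw [DFun, div_le_iff₀ hn']
    calc (r : ℝ) * mFun r d n ≤ r * (d / r * n) := by gcongr; exact mFun_le n
      _ = d * n := by field_simp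
  obtain ⟨hXY1, hXY2⟩ := chiVal_mul_bounds hr hd0 hL η (DFun r d n) hη hη1 hLη hD1 hD2
  have hY0 : 0 < (r * Real.log (DFun r d n) / (((r : ℝ) - 1) * DFun r d n)) ^
      ((1 : ℝ) / ((r : ℝ) - 1)) :=
    pos_of_mul_pos_right (lt_of_lt_of_le (by linarith) hXY1) hX0.le
  refine relative_errors _ _ (chiVal r d) _ n ε η hη hη1 hηε hX0 hY0 hn' (by positivity)
    (le_trans (by exact_mod_cast h1) hkX) (by positivity) (Nat.lt_ceil.1 h2).le
    (by exact_mod_cast h3) hXY1 hXY2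
end

section
/- For every integer r ≥ 3 and every ε > 0 there exists d₀ = d₀(r, ε) such that for every real d ≥ d₀ and every integer j with 1 ≤ j ≤ r−1 the following holds. Set a := (1 + ε/2)·(r log d/((r−1)d))^{1/(r−1)}, κ_j := (10d/r)·C(r,j)·a^j, and p = p(n) := d(r−1)!/n^{r−1}. Then n · Σ_{s=1}^{⌊an⌋} C(n,s)·(1−p)^{C(s,r)}·C( C(s,j)·C(n,r−j), ⌈κ_j n⌉ )·p^{⌈κ_j n⌉} → 0 as n → ∞. -/
open Finset Filter Real

/-! The expected number of pairs is controlled by the edge factor alone. Write `K = ⌈κ n⌉` and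
`M = C(s,j) C(n,r-j)`. For `s ≤ a n` the mean `M p` is at most `κ n / 10 ≤ K / 10`
(`mean_le`), so `C(M,K) p^K ≤ (K/10)^K / K! ≤ (e/10)^K` (`choose_mul_pow_le`). For `d ≥ e`
one has `a^j ≥ log d / d`, hence `κ ≥ 10 log d ≥ 1` and `K ≥ n` (`one_le_kappa`). The crude
bounds `C(n,s) ≤ 2^n` and `(1-p)^{C(s,r)} ≤ 1` then leave at most
`a n^2 (2e/10)^n`, which tends to `0`. -/

/-- Binomial upper tail: a mean `M p` at most a tenth of `K` makes `C(M,K) p^K` at most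
`(e/10)^K`; the constant `0.28` is a rational bound for `e/10`. -/
lemma choose_mul_pow_le (M K : ℕ) (p : ℝ) (hp : 0 ≤ p) (h : (M : ℝ) * p ≤ K / 10) :
    (M.choose K : ℝ) * p ^ K ≤ (0.28 : ℝ) ^ K := by
  have h1 : (M.choose K : ℝ) ≤ (M : ℝ) ^ K / (K.factorial : ℝ) := Nat.choose_le_pow_div K M
  have hK : (K : ℝ) ^ K / (K.factorial : ℝ) ≤ Real.exp K :=
    Real.pow_div_factorial_le_exp _ (Nat.cast_nonneg K) K
  have he : Real.exp (K : ℝ) ≤ (2.8 : ℝ) ^ K := by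
    rw [← Real.exp_one_pow]
    exact pow_le_pow_left₀ (Real.exp_pos 1).le (by linarith [Real.exp_one_lt_d9]) K
  calc (M.choose K : ℝ) * p ^ K ≤ (M : ℝ) ^ K / (K.factorial : ℝ) * p ^ K := by gcongr
    _ = ((M : ℝ) * p) ^ K / (K.factorial : ℝ) := by rw [mul_pow]; ring
    _ ≤ ((K : ℝ) / 10) ^ K / (K.factorial : ℝ) := by gcongr
    _ = (K : ℝ) ^ K / (K.factorial : ℝ) / 10 ^ K := by rw [div_pow]; ring
    _ ≤ (2.8 : ℝ) ^ K / 10 ^ K := by gcongr; exact hK.trans he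
    _ = (0.28 : ℝ) ^ K := by rw [← div_pow]; norm_num

/-- The expected number of edges meeting an `s`-set in `j` vertices is at most `κ n / 10`. -/
lemma mean_le (r j n s : ℕ) (hr : 3 ≤ r) (hj : j ≤ r - 1) (hn : 1 ≤ n) (a d : ℝ)
    (hd : 0 ≤ d) (hs : (s : ℝ) ≤ a * n) :
    ((s.choose j * n.choose (r - j) : ℕ) : ℝ) *
        (d * ((r - 1).factorial : ℝ) / (n : ℝ) ^ (r - 1)) ≤
      (10 * d / r) * (r.choose j : ℝ) * a ^ j * n / 10 := by
  have hn0 : (0 : ℝ) < n := by exact_mod_cast hn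
  have h1 : (s.choose j : ℝ) ≤ (a * n) ^ j / (j.factorial : ℝ) :=
    (Nat.choose_le_pow_div j s).trans (by gcongr)
  have h2 : (n.choose (r - j) : ℝ) ≤ (n : ℝ) ^ (r - j) / ((r - j).factorial : ℝ) :=
    Nat.choose_le_pow_div _ _
  have hc : (r.choose j : ℝ) = (r.factorial : ℝ) / (j.factorial * (r - j).factorial) :=
    Nat.cast_choose ℝ (by omega)
  have hf : (r.factorial : ℝ) = r * ((r - 1).factorial : ℝ) := by
    exact_mod_cast (Nat.mul_factorial_pred (by omega)).symm
  have hpow : (n : ℝ) ^ j * (n : ℝ) ^ (r - j) = (n : ℝ) ^ (r - 1) * n := by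
    rw [← pow_add, ← pow_succ]; congr 1; omega
  have hr0 : (r : ℝ) ≠ 0 := by
    have : r ≠ 0 := by omega
    exact_mod_cast this
  have hj0 : (j.factorial : ℝ) ≠ 0 := by exact_mod_cast j.factorial_ne_zero
  have hrj0 : ((r - j).factorial : ℝ) ≠ 0 := by exact_mod_cast (r - j).factorial_ne_zero
  push_cast
  calc (s.choose j : ℝ) * (n.choose (r - j) : ℝ) *
        (d * ((r - 1).factorial : ℝ) / (n : ℝ) ^ (r - 1))
      ≤ ((a * n) ^ j / (j.factorial : ℝ)) * ((n : ℝ) ^ (r - j) / ((r - j).factorial : ℝ)) *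
        (d * ((r - 1).factorial : ℝ) / (n : ℝ) ^ (r - 1)) := by
        have h0 : (0 : ℝ) ≤ (a * n) ^ j / (j.factorial : ℝ) := le_trans (Nat.cast_nonneg _) h1
        gcongr
    _ = a ^ j * ((n : ℝ) ^ j * (n : ℝ) ^ (r - j)) / (n : ℝ) ^ (r - 1) * d *
          ((r - 1).factorial : ℝ) / (j.factorial * (r - j).factorial) := by
        rw [mul_pow]; field_simp
    _ = (10 * d / r) * (r.choose j : ℝ) * a ^ j * n / 10 := by
        rw [hpow, hc, hf]; field_simp

lemma le_choose_of_mem (m k : ℕ) (h1 : 1 ≤ k) (h2 : k < m) : m ≤ m.choose k := by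
  induction m generalizing k with
  | zero => omega
  | succ m ih =>
    obtain ⟨k, rfl⟩ : ∃ i, k = i + 1 := ⟨k - 1, by omega⟩
    rw [Nat.choose_succ_succ']
    rcases Nat.lt_or_ge (k + 1) m with h | h
    · have := ih (k + 1) h1 h
      have : 0 < m.choose k := Nat.choose_pos (by omega)
      omega
    · obtain rfl : m = k + 1 := by omega
      simp

/-- For `d ≥ e` the density `κ` is at least `1`, uniformly in `j`: either `a ≥ 1`, or
`a^j ≥ a^(r-1)`, and in both cases `a^j ≥ log d / d`. -/
lemma one_le_kappa (r j : ℕ) (hr : 3 ≤ r) (hj1 : 1 ≤ j) (hj : j ≤ r - 1) (ε d a : ℝ)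
    (hε : 0 < ε) (hd : Real.exp 1 ≤ d)
    (ha : a = (1 + ε / 2) *
      ((r * Real.log d / (((r : ℝ) - 1) * d)) ^ ((1 : ℝ) / ((r : ℝ) - 1)))) :
    0 ≤ a ∧ 1 ≤ (10 * d / r) * (r.choose j : ℝ) * a ^ j := by
  have hd0 : 0 < d := (Real.exp_pos 1).trans_le hd
  have hlog : 1 ≤ Real.log d := (Real.le_log_iff_exp_le hd0).2 hd
  have hr3 : (3 : ℝ) ≤ r := by exact_mod_cast hr
  have hr1 : (0 : ℝ) < (r : ℝ) - 1 := by linarith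
  set b : ℝ := r * Real.log d / (((r : ℝ) - 1) * d) with hb
  have hb0 : 0 ≤ b := by positivity
  have hblow : Real.log d / d ≤ b := by
    rw [hb, div_le_div_iff₀ hd0 (by positivity)]
    have : 0 ≤ Real.log d * d := by positivity
    nlinarith
  have ha0 : 0 ≤ a := by rw [ha]; positivity
  refine ⟨ha0, ?_⟩
  have har : b ≤ a ^ (r - 1) := by
    have hcast : ((r - 1 : ℕ) : ℝ) = (r : ℝ) - 1 := by
      rw [Nat.cast_sub (by omega)]; norm_num
    have e : (b ^ ((1 : ℝ) / ((r : ℝ) - 1))) ^ (r - 1) = b := by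
      rw [← Real.rpow_natCast, ← Real.rpow_mul hb0, hcast, one_div_mul_cancel hr1.ne',
        Real.rpow_one]
    rw [ha, mul_pow, e]
    exact le_mul_of_one_le_left hb0 (one_le_pow₀ (by linarith))
  have haj : Real.log d / d ≤ a ^ j := by
    rcases le_total a 1 with h | h
    · exact (hblow.trans har).trans (pow_le_pow_of_le_one ha0 h hj)
    · refine le_trans ?_ (one_le_pow₀ h)
      rw [div_le_one hd0]
      linarith [Real.log_le_sub_one_of_pos hd0]
  have hch : (r : ℝ) ≤ (r.choose j : ℝ) := by
    exact_mod_cast le_choose_of_mem r j hj1 (by omega)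
  calc (1 : ℝ) ≤ 10 * Real.log d := by linarith
    _ = (10 * d / r) * (r : ℝ) * (Real.log d / d) := by field_simp
    _ ≤ (10 * d / r) * (r.choose j : ℝ) * a ^ j := by gcongr

/-- For every integer `r ≥ 3` and `ε > 0` there is `d₀` such that for every real `d ≥ d₀`
and every `1 ≤ j ≤ r−1`, with `a = (1+ε/2)(r log d/((r−1)d))^(1/(r−1))`,
`κ_j = (10d/r)C(r,j)a^j` and `p(n) = d(r−1)!/n^(r−1)`, we have
`n · Σ_{s=1}^{⌊an⌋} C(n,s)(1−p)^{C(s,r)} C(C(s,j)C(n,r−j), ⌈κ_j n⌉) p^{⌈κ_j n⌉} → 0`. -/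
theorem first_moment_independent_sets_with_many_edges
    (r : ℕ) (hr : 3 ≤ r) (ε : ℝ) (hε : 0 < ε) :
    ∃ d₀ : ℝ, ∀ d : ℝ, d₀ ≤ d →
      ∀ j : ℕ, 1 ≤ j → j ≤ r - 1 →
        ∀ a κ : ℝ, ∀ p : ℕ → ℝ,
          a = (1 + ε / 2) *
              ((r * Real.log d / (((r : ℝ) - 1) * d)) ^ ((1 : ℝ) / ((r : ℝ) - 1))) →
          κ = (10 * d / r) * (r.choose j : ℝ) * a ^ j →
          (∀ n : ℕ, p n = d * ((r - 1).factorial : ℝ) / (n : ℝ) ^ (r - 1)) →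
          Filter.Tendsto
            (fun n : ℕ =>
              (n : ℝ) *
                ∑ s ∈ Finset.Icc 1 ⌊a * n⌋₊,
                  (n.choose s : ℝ) * (1 - p n) ^ (s.choose r) *
                    (((s.choose j * n.choose (r - j)).choose ⌈κ * n⌉₊ : ℝ) *
                      (p n) ^ ⌈κ * n⌉₊))
            Filter.atTop (nhds 0) := by
  refine ⟨Real.exp 1, ?_⟩
  intro d hd j hj1 hj a κ p ha hκ hp
  obtain ⟨ha0, hk1⟩ := one_le_kappa r j hr hj1 hj ε d a hε hd ha
  rw [← hκ] at hk1
  have hd0 : 0 < d := (Real.exp_pos 1).trans_le hd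
  have hp0 : ∀ n, 0 ≤ p n := fun n => by rw [hp]; positivity
  have hpt : Tendsto p atTop (nhds 0) := by
    have h : Tendsto (fun n : ℕ => d * ((r - 1).factorial : ℝ) / (n : ℝ) ^ (r - 1)) atTop
        (nhds 0) :=
      tendsto_const_nhds.div_atTop
        ((tendsto_pow_atTop (by omega)).comp tendsto_natCast_atTop_atTop)
    exact h.congr fun n => (hp n).symm
  have hp1 : ∀ᶠ n in atTop, p n ≤ 1 := hpt.eventually_le_const one_pos
  have hlim : Tendsto (fun n : ℕ => a * ((n : ℝ) ^ 2 * (0.56 : ℝ) ^ n)) atTop (nhds 0) := by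
    simpa using (tendsto_pow_const_mul_const_pow_of_abs_lt_one 2
      (r := (0.56 : ℝ)) (by rw [abs_of_pos] <;> norm_num)).const_mul a
  refine squeeze_zero' ?_ ?_ hlim
  · filter_upwards [hp1] with n hn
    have h1 : 0 ≤ 1 - p n := by linarith
    have h2 := hp0 n
    positivity
  · filter_upwards [hp1, eventually_ge_atTop 1] with n hn hn1
    have hp0n := hp0 n
    have hK : κ * n ≤ (⌈κ * n⌉₊ : ℝ) := Nat.le_ceil _
    have hnK : n ≤ ⌈κ * n⌉₊ := by
      have : (n : ℝ) ≤ κ * n := le_mul_of_one_le_left (Nat.cast_nonneg n) hk1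
      exact_mod_cast this.trans hK
    have hterm : ∀ s ∈ Finset.Icc 1 ⌊a * n⌋₊,
        (n.choose s : ℝ) * (1 - p n) ^ (s.choose r) *
          (((s.choose j * n.choose (r - j)).choose ⌈κ * n⌉₊ : ℝ) * (p n) ^ ⌈κ * n⌉₊) ≤
        (0.56 : ℝ) ^ n := by
      intro s hs
      have hsa : (s : ℝ) ≤ a * n :=
        (Nat.le_floor_iff (by positivity)).1 (Finset.mem_Icc.1 hs).2
      have hm := mean_le r j n s hr hj hn1 a d hd0.le hsa
      rw [← hp n, ← hκ] at hm
      have h1 := choose_mul_pow_le (s.choose j * n.choose (r - j)) ⌈κ * n⌉₊ (p n) hp0n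
        (hm.trans (by gcongr))
      have h2 : (0.28 : ℝ) ^ ⌈κ * n⌉₊ ≤ (0.28 : ℝ) ^ n :=
        pow_le_pow_of_le_one (by norm_num) (by norm_num) hnK
      have h3 : (n.choose s : ℝ) ≤ 2 ^ n := by exact_mod_cast Nat.choose_le_two_pow n s
      have h4 : (1 - p n) ^ (s.choose r) ≤ 1 :=
        pow_le_one₀ (by linarith) (by linarith)
      have h5 : 0 ≤ (1 - p n) ^ (s.choose r) := pow_nonneg (by linarith) _
      calc _ ≤ (2 : ℝ) ^ n * 1 * (0.28 : ℝ) ^ n := by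
            gcongr
            exact h1.trans h2
        _ = (0.56 : ℝ) ^ n := by rw [mul_one, ← mul_pow]; norm_num
    have hcard := Finset.sum_le_card_nsmul _ _ _ hterm
    rw [Nat.card_Icc, Nat.add_sub_cancel, nsmul_eq_mul] at hcard
    have hfl : (⌊a * n⌋₊ : ℝ) ≤ a * n := Nat.floor_le (by positivity)
    calc _ ≤ (n : ℝ) * ((⌊a * n⌋₊ : ℝ) * (0.56 : ℝ) ^ n) := by gcongr
      _ ≤ (n : ℝ) * (a * n * (0.56 : ℝ) ^ n) := by gcongr
      _ = a * ((n : ℝ) ^ 2 * (0.56 : ℝ) ^ n) := by ring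
end
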